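/- arXiv:2102.13193 — 10 statements merged into one kernel-verified Lean document; each statement's English description precedes it below -/
import Mathlib

section
/- Let G = K_n be the complete graph on n vertices, T a spanning tree of G, and c a tree-cycle of T of length k. Then the number of external tree-cycles having non-empty intersection with c equals (n-k)(k-1). -/
open SimpleGraph

/-- The set of edges lying on some path (in a tree: the unique path) between `x` and `y`
in the graph `T`. -/
def pathEdges {V : Type*} (T : SimpleGraph V) (x y : V) : Set (Sym2 V) :=
  {f | ∃ p : T.Walk x y, p.IsPath ∧ f ∈ p.edges}

/-- The edge set of the tree-cycle induced (in the spanning tree `T`) by the cycle-edge `e`: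
the edge `e` itself together with the edges of the (unique) path in `T` between
the endpoints of `e`. -/
def cycEdges {V : Type*} (T : SimpleGraph V) (e : Sym2 V) : Set (Sym2 V) :=
  insert e {f | ∃ x y, e = s(x, y) ∧ f ∈ pathEdges T x y}

/-- The vertex set of the tree-cycle induced (in the spanning tree `T`) by the
cycle-edge `e`. -/
def cycVerts {V : Type*} (T : SimpleGraph V) (e : Sym2 V) : Set V :=
  {v | ∃ x y, e = s(x, y) ∧ ∃ p : T.Walk x y, p.IsPath ∧ v ∈ p.support}

/-- Two tree-cycles (induced by the cycle-edges `e` and `f`) have non-empty intersection: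
some edge of `T` belongs to both of them. -/
def cyclesIntersect {V : Type*} (T : SimpleGraph V) (e f : Sym2 V) : Prop :=
  (cycEdges T e ∩ cycEdges T f ∩ T.edgeSet).Nonempty

/-- The cycle intersection number `∩_T(c)` of the tree-cycle `c` induced by the
cycle-edge `e`: the number of tree-cycles distinct from `c` whose intersection with `c`
is non-empty. -/
noncomputable def cycleInterNum {V : Type*} (G T : SimpleGraph V) (e : Sym2 V) : ℕ :=
  {f | f ∈ G.edgeSet \ T.edgeSet ∧ f ≠ e ∧ cyclesIntersect T e f}.ncard

/-- The tree intersection number `∩_G(T)`: the number of unordered pairs of distinct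
tree-cycles of `T` whose intersection is non-empty. -/
noncomputable def treeInterNum {V : Type*} (G T : SimpleGraph V) : ℕ :=
  {p : Sym2 (Sym2 V) | ∃ e f : Sym2 V, p = s(e, f) ∧ e ≠ f ∧
    e ∈ G.edgeSet \ T.edgeSet ∧ f ∈ G.edgeSet \ T.edgeSet ∧ cyclesIntersect T e f}.ncard

/-- `T` is a star spanning tree of `G` with center `v`. -/
def IsStarSpanningTree {V : Type*} (G T : SimpleGraph V) (v : V) : Prop :=
  T ≤ G ∧ T.IsTree ∧ ∀ u, u ≠ v → T.Adj v u

/-- `closest-point-set(w, c)`: the set of vertices outside the tree-cycle `c` (induced by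
the cycle-edge `e`) whose closest point on `c` (with respect to distance in `T`) is `w`. -/
def closestPointSet {V : Type*} (T : SimpleGraph V) (e : Sym2 V) (w : V) : Set V :=
  {v | v ∉ cycVerts T e ∧ ∀ u ∈ cycVerts T e, T.dist v w ≤ T.dist v u}

theorem aux_mem_cycVerts {V : Type*} {T : SimpleGraph V} (hT : T.IsAcyclic) {a b : V}
    (p : T.Walk a b) (hp : p.IsPath) (v : V) : v ∈ cycVerts T s(a, b) ↔ v ∈ p.support := by
  constructor
  · rintro ⟨x, y, hxy, q, hq, hv⟩
    rcases Sym2.eq_iff.1 hxy with ⟨rfl, rfl⟩ | ⟨rfl, rfl⟩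
    · have := congrArg Subtype.val (hT.path_unique ⟨p, hp⟩ ⟨q, hq⟩)
      simp only at this
      rwa [this]
    · have := congrArg Subtype.val (hT.path_unique ⟨p, hp⟩ ⟨q.reverse, hq.reverse⟩)
      simp only at this
      rw [this]; simpa using hv
  · intro h
    exact ⟨a, b, rfl, p, hp, h⟩

theorem aux_mem_cycEdges {V : Type*} {T : SimpleGraph V} (hT : T.IsAcyclic) {a b : V}
    (p : T.Walk a b) (hp : p.IsPath) (g : Sym2 V) :
    g ∈ cycEdges T s(a, b) ↔ g = s(a, b) ∨ g ∈ p.edges := by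
  unfold cycEdges pathEdges
  rw [Set.mem_insert_iff]
  apply or_congr Iff.rfl
  constructor
  · rintro ⟨x, y, hxy, q, hq, hv⟩
    rcases Sym2.eq_iff.1 hxy with ⟨rfl, rfl⟩ | ⟨rfl, rfl⟩
    · have := congrArg Subtype.val (hT.path_unique ⟨p, hp⟩ ⟨q, hq⟩)
      simp only at this
      rwa [this]
    · have := congrArg Subtype.val (hT.path_unique ⟨p, hp⟩ ⟨q.reverse, hq.reverse⟩)
      simp only at this
      rw [this]; simpa using hv
  · intro h
    exact ⟨a, b, rfl, p, hp, h⟩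

/-- path from `y` reaching the support of `p` only at its end. -/
theorem aux_gate {V : Type*} {T : SimpleGraph V} (S : Set V) {y b : V}
    (q : T.Walk y b) (hb : b ∈ S) :
    ∃ w ∈ S, ∃ r : T.Walk y w, r.IsPath ∧ ∀ v ∈ r.support, v ∈ S → v = w := by
  classical
  induction q with
  | nil => exact ⟨_, hb, .nil, by simp, by simp⟩
  | @cons u v w h q ih =>
    by_cases hu : u ∈ S
    · exact ⟨u, hu, .nil, by simp, by simp⟩
    · obtain ⟨w, hw, r, hr, hrS⟩ := ih hb
      refine ⟨w, hw, (Walk.cons h r).bypass, Walk.bypass_isPath _, ?_⟩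
      intro z hz hzS
      have := Walk.support_bypass_subset _ hz
      rw [Walk.support_cons, List.mem_cons] at this
      rcases this with rfl | h'
      · exact absurd hzS hu
      · exact hrS z h' hzS

theorem aux_key {V : Type*} {T : SimpleGraph V} (hT : T.IsTree) {a b : V}
    (p : T.Walk a b) (hp : p.IsPath) (hab : s(a, b) ∉ T.edgeSet) (y : V) (hy : y ∉ p.support) :
    ∃ w ∈ p.support, ∀ x ∈ p.support,
      ((s(x, y) ∉ T.edgeSet ∧ cyclesIntersect T s(a, b) s(x, y)) ↔ x ≠ w) := by
  classical
  obtain ⟨q⟩ := hT.1 y b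
  obtain ⟨w, hw, r, hr, hrS⟩ := aux_gate {v | v ∈ p.support} q p.end_mem_support
  refine ⟨w, hw, fun x hx => ?_⟩
  obtain ⟨t, ht, hts, hte⟩ : ∃ t : T.Walk w x, t.IsPath ∧ (∀ v ∈ t.support, v ∈ p.support) ∧
      (∀ v ∈ t.edges, v ∈ p.edges) := by
    refine ⟨((p.takeUntil w hw).reverse.append (p.takeUntil x hx)).bypass,
      Walk.bypass_isPath _, fun v hv => ?_, fun v hv => ?_⟩
    · have := Walk.support_bypass_subset _ hv
      rw [Walk.mem_support_append_iff, Walk.support_reverse, List.mem_reverse] at this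
      exact this.elim (fun h => Walk.support_takeUntil_subset _ _ h)
        (fun h => Walk.support_takeUntil_subset _ _ h)
    · have := Walk.edges_bypass_subset _ hv
      rw [Walk.edges_append, List.mem_append, Walk.edges_reverse, List.mem_reverse] at this
      exact this.elim (fun h => Walk.edges_takeUntil_subset _ _ h)
        (fun h => Walk.edges_takeUntil_subset _ _ h)
  have hpath : (r.append t).IsPath := by
    rw [Walk.isPath_def, Walk.support_append, List.nodup_append]
    refine ⟨hr.support_nodup, ht.support_nodup.sublist (List.tail_sublist _), ?_⟩
    rintro u hu v hv rfl
    have h1 : u = w := hrS u hu (hts u (List.mem_of_mem_tail hv))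
    subst h1
    have := ht.support_nodup
    rw [← Walk.cons_tail_support, List.nodup_cons] at this
    exact this.1 hv
  have hE : ∀ g, g ∈ cycEdges T s(x, y) ↔ g = s(y, x) ∨ g ∈ (r.append t).edges := by
    intro g
    rw [Sym2.eq_swap]
    exact aux_mem_cycEdges hT.2 _ hpath g
  have hr0 : ∀ g ∈ r.edges, g ∉ p.edges := by
    intro g
    induction g with | _ c d =>
    intro h1 h2
    have hc := hrS c (Walk.fst_mem_support_of_mem_edges _ h1) (Walk.fst_mem_support_of_mem_edges _ h2)
    have hd := hrS d (Walk.snd_mem_support_of_mem_edges _ h1) (Walk.snd_mem_support_of_mem_edges _ h2)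
    have := Walk.adj_of_mem_edges _ h1
    rw [hc, hd] at this
    exact this.ne rfl
  constructor
  · rintro ⟨hn, g, ⟨hg1, hg2⟩, hgT⟩ rfl
    rw [aux_mem_cycEdges hT.2 p hp] at hg1
    rw [hE] at hg2
    have hg1' : g ∈ p.edges := by
      rcases hg1 with rfl | h
      · exact absurd hgT hab
      · exact h
    rcases hg2 with rfl | h
    · rw [Sym2.eq_swap] at hn
      exact hn hgT
    · rw [Walk.edges_append, List.mem_append] at h
      rcases h with h | h
      · exact hr0 g h hg1'
      · have : t = Walk.nil := by simpa using ht
        rw [this] at h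
        simp at h
  · intro hxw
    obtain ⟨g, hg⟩ : ∃ g, g ∈ t.edges := by
      cases t with
      | nil => exact absurd rfl hxw
      | @cons _ v _ h t => exact ⟨s(w, v), by simp⟩
    have hgp := hte g hg
    have hga : g ∈ (r.append t).edges := by
      rw [Walk.edges_append, List.mem_append]; exact Or.inr hg
    refine ⟨fun hadj => ?_, g, ⟨?_, ?_⟩, Walk.edges_subset_edgeSet _ hg⟩
    · have hadj' : T.Adj y x := (T.mem_edgeSet.1 hadj).symm
      have h1 : (Walk.cons hadj' Walk.nil).IsPath := by
        simp [hadj'.ne]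
      have := congrArg Subtype.val (hT.2.path_unique ⟨_, hpath⟩ ⟨_, h1⟩)
      simp only at this
      rw [this] at hga
      simp at hga
      subst hga
      exact hy (Walk.fst_mem_support_of_mem_edges _ hgp)
    · rw [aux_mem_cycEdges hT.2 p hp]; exact Or.inr hgp
    · rw [hE]; exact Or.inr hga

/-- In the complete graph `K_n`, for a spanning tree `T` and a tree-cycle
`c` of length `k` (induced by the cycle-edge `e`), the number of external tree-cycles
(exactly one endpoint of the inducing cycle-edge on `c`) having non-empty intersection
with `c` is `(n-k)(k-1)`. -/
theorem stmt_2 {V : Type*} [Fintype V] (n : ℕ) (hn : Fintype.card V = n)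
    (T : SimpleGraph V) (hle : T ≤ (⊤ : SimpleGraph V)) (hT : T.IsTree)
    (e : Sym2 V) (he : e ∈ (⊤ : SimpleGraph V).edgeSet \ T.edgeSet)
    (k : ℕ) (hk : (cycVerts T e).ncard = k) :
    (({f | f ∈ (⊤ : SimpleGraph V).edgeSet \ T.edgeSet ∧ f ≠ e ∧ cyclesIntersect T e f ∧
        ∃ x y, f = s(x, y) ∧ x ∈ cycVerts T e ∧ y ∉ cycVerts T e} : Set (Sym2 V)).ncard : ℚ)
      = ((n : ℚ) - k) * ((k : ℚ) - 1) := by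
  classical
  induction e with | _ a b =>
  obtain ⟨p, hp⟩ := hT.1.exists_isPath a b
  have hS := aux_mem_cycVerts hT.2 p hp
  have key := aux_key hT p hp he.2
  choose! w hw hwk using key
  set F : Finset V := p.support.toFinset with hF
  have hFS : cycVerts T s(a, b) = (F : Set V) := by
    ext v; rw [hS]; simp [hF]
  have hkF : F.card = k := by rw [← hk, hFS, Set.ncard_coe_finset]
  let D : Finset (Σ _ : V, V) := (Fᶜ).sigma (fun y => F.erase (w y))
  have hset : ({f | f ∈ (⊤ : SimpleGraph V).edgeSet \ T.edgeSet ∧ f ≠ s(a, b) ∧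
      cyclesIntersect T s(a, b) f ∧
        ∃ x y, f = s(x, y) ∧ x ∈ cycVerts T s(a, b) ∧ y ∉ cycVerts T s(a, b)} : Set (Sym2 V))
      = ((D.image (fun z => s(z.2, z.1)) : Finset (Sym2 V)) : Set (Sym2 V)) := by
    ext f
    simp only [Set.mem_setOf_eq, Finset.coe_image, Set.mem_image, Finset.mem_coe]
    constructor
    · rintro ⟨h1, -, h3, x, y, rfl, hx, hy⟩
      rw [hS] at hx hy
      refine ⟨⟨y, x⟩, ?_, rfl⟩
      simp only [D, Finset.mem_sigma, Finset.mem_compl, Finset.mem_erase, hF, List.mem_toFinset]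
      exact ⟨hy, (hwk y hy x hx).1 ⟨h1.2, h3⟩, hx⟩
    · rintro ⟨⟨y, x⟩, hz, rfl⟩
      simp only [D, Finset.mem_sigma, Finset.mem_compl, Finset.mem_erase, hF,
        List.mem_toFinset] at hz
      obtain ⟨hy, hxw, hx⟩ := hz
      have h := (hwk y hy x hx).2 hxw
      refine ⟨⟨?_, h.1⟩, ?_, h.2, x, y, rfl, (hS x).2 hx, fun h => hy ((hS y).1 h)⟩
      · rw [SimpleGraph.mem_edgeSet, SimpleGraph.top_adj]
        intro hxy
        have hxy' : x = y := hxy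
        exact hy (hxy' ▸ hx)
      · intro h
        rcases Sym2.eq_iff.1 h with ⟨_, rfl⟩ | ⟨_, rfl⟩
        · exact hy p.end_mem_support
        · exact hy p.start_mem_support
  have hcard : (D.image (fun z => s(z.2, z.1))).card = (n - k) * (k - 1) := by
    rw [Finset.card_image_of_injOn]
    · rw [Finset.card_sigma, Finset.sum_const_nat (m := k - 1), Finset.card_compl, hn, hkF]
      intro y hy
      rw [Finset.card_erase_of_mem, hkF]
      simp only [hF, Finset.mem_compl, List.mem_toFinset] at hy ⊢
      exact hw y hy
    · rintro ⟨y, x⟩ h1 ⟨y', x'⟩ h2 h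
      simp only [D, Finset.mem_coe, Finset.mem_sigma, Finset.mem_compl, Finset.mem_erase] at h1 h2
      rcases Sym2.eq_iff.1 h with ⟨h3, h4⟩ | ⟨h3, h4⟩
      · simp only at h3 h4
        subst h3 h4
        rfl
      · simp only at h3 h4
        subst h3 h4
        exact absurd h1.2.2 h2.1
  rw [hset, Set.ncard_coe_finset, hcard]
  have hkn : k ≤ n := by rw [← hkF, ← hn]; exact Finset.card_le_univ _
  have hk1 : 1 ≤ k := by
    rw [← hkF]
    exact Finset.card_pos.2 ⟨a, by simp [hF]⟩
  push_cast [Nat.cast_sub hkn, Nat.cast_sub hk1]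
  rfl
end

section
/- Let G = K_n be the complete graph on n vertices, T a spanning tree of G, and c a tree-cycle of T of length k with vertices w_1, …, w_k. Let q_i = |closest-point-set(w_i, c)|. Then the number of transit tree-cycles having non-empty intersection with c equals Σ_{i<j} q_i q_j = (1/2) Σ_{i=1}^{k} q_i (n - k - q_i). -/
open SimpleGraph

section helpers

variable {V : Type*} {T : SimpleGraph V}

lemma isPath_append_aux {u v w : V} {p : T.Walk u v} {q : T.Walk v w} (hp : p.IsPath)
    (hq : q.IsPath) (h : ∀ z ∈ p.support, z ∈ q.support → z = v) : (p.append q).IsPath := by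
  rw [Walk.isPath_def, Walk.support_append]
  have hq' := hq.support_nodup
  rw [← Walk.cons_tail_support] at hq'
  rw [List.nodup_cons] at hq'
  rw [List.nodup_append']
  refine ⟨hp.support_nodup, hq'.2, ?_⟩
  intro z hz hz'
  have := h z hz (List.mem_of_mem_tail hz')
  subst this
  exact hq'.1 hz'

lemma path_eq_aux (hT : T.IsTree) {u v : V} {p q : T.Walk u v} (hp : p.IsPath) (hq : q.IsPath) :
    p = q := (hT.existsUnique_path u v).unique hp hq

lemma path_length_aux (hT : T.IsTree) {u v : V} {p : T.Walk u v} (hp : p.IsPath) :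
    p.length = T.dist u v := by
  obtain ⟨q, hq, hl⟩ := hT.connected.exists_path_of_dist u v
  rw [path_eq_aux hT hp hq, hl]

lemma dist_mem_aux (hT : T.IsTree) {u v z : V} {p : T.Walk u v} (hp : p.IsPath)
    (hz : z ∈ p.support) : T.dist u v = T.dist u z + T.dist z v := by
  obtain ⟨q, r, hq, hr, h⟩ := hp.mem_support_iff_exists_append.1 hz
  rw [← path_length_aux hT hp, ← path_length_aux hT hq, ← path_length_aux hT hr, h,
    Walk.length_append]

/-- Paths inside a set. -/
def PConv (T : SimpleGraph V) (C : Set V) : Prop :=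
  ∀ u ∈ C, ∀ v ∈ C, ∃ r : T.Walk u v, r.IsPath ∧ ∀ z ∈ r.support, z ∈ C

/-- `w` is a closest point. -/
def Gate (T : SimpleGraph V) (C : Set V) (v w : V) : Prop :=
  w ∈ C ∧ ∀ u ∈ C, T.dist v w ≤ T.dist v u

lemma gate_path (hT : T.IsTree) {C : Set V} {v w : V} (hg : Gate T C v w)
    {p : T.Walk v w} (hp : p.IsPath) : ∀ z ∈ p.support, z ∈ C → z = w := by
  intro z hz hzC
  have h1 := dist_mem_aux hT hp hz
  have h2 := hg.2 z hzC
  have : T.dist z w = 0 := by omega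
  exact (hT.connected.dist_eq_zero_iff).1 this

lemma gate_dist (hT : T.IsTree) {C : Set V} (hC : PConv T C) {v w u : V} (hg : Gate T C v w)
    (hu : u ∈ C) : T.dist v u = T.dist v w + T.dist w u := by
  obtain ⟨p, hp, hl⟩ := hT.connected.exists_path_of_dist v w
  obtain ⟨r, hr, hrC⟩ := hC w hg.1 u hu
  have := isPath_append_aux hp hr (fun z hz hz' => gate_path hT hg hp z hz (hrC z hz'))
  rw [← path_length_aux hT this, Walk.length_append, hl, path_length_aux hT hr]

lemma gate_unique (hT : T.IsTree) {C : Set V} (hC : PConv T C) {v w w' : V} (hg : Gate T C v w)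
    (hg' : Gate T C v w') : w = w' := by
  have h1 := gate_dist hT hC hg hg'.1
  have h2 := hg'.2 w hg.1
  have : T.dist w w' = 0 := by omega
  exact (hT.connected.dist_eq_zero_iff).1 this

lemma gate_on_path (hT : T.IsTree) {C : Set V} {v w z : V} (hg : Gate T C v w)
    {p : T.Walk v w} (hp : p.IsPath) (hz : z ∈ p.support) : Gate T C z w := by
  refine ⟨hg.1, fun u hu => ?_⟩
  have h1 := dist_mem_aux hT hp hz
  have h2 := hg.2 u hu
  have h3 := hT.connected.dist_triangle (u := v) (v := z) (w := u)
  omega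

lemma gate_exists [Finite V] (T : SimpleGraph V) {C : Set V} (hne : C.Nonempty) (v : V) :
    ∃ w, Gate T C v w := by
  obtain ⟨w, hw, h⟩ := Set.exists_min_image C (fun u => T.dist v u) C.toFinite hne
  exact ⟨w, hw, h⟩

lemma through_path (hT : T.IsTree) {C : Set V} (hC : PConv T C) {x y a b : V}
    (ha : Gate T C x a) (hb : Gate T C y b) (hab : a ≠ b) {r : T.Walk a b} (hr : r.IsPath) :
    ∃ p : T.Walk x y, p.IsPath ∧ (∀ f ∈ r.edges, f ∈ p.edges) ∧ a ∈ p.support := by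
  have hrC : ∀ z ∈ r.support, z ∈ C := by
    obtain ⟨r', hr', h⟩ := hC a ha.1 b hb.1
    rwa [path_eq_aux hT hr hr']
  obtain ⟨p, hp, -⟩ := hT.connected.exists_path_of_dist x a
  obtain ⟨s, hs, -⟩ := hT.connected.exists_path_of_dist y b
  have h1 : (p.append r).IsPath :=
    isPath_append_aux hp hr (fun z hz hz' => gate_path hT ha hp z hz (hrC z hz'))
  have h2 : ((p.append r).append s.reverse).IsPath := by
    refine isPath_append_aux h1 hs.reverse ?_
    intro z hz hz'
    rw [Walk.support_reverse, List.mem_reverse] at hz'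
    rw [Walk.mem_support_append_iff] at hz
    rcases hz with hz | hz
    · exact absurd (gate_unique hT hC (gate_on_path hT ha hp hz) (gate_on_path hT hb hs hz')) hab
    · exact gate_path hT hb hs z hz' (hrC z hz)
  refine ⟨_, h2, ?_, ?_⟩
  · intro f hf
    simp [Walk.edges_append, hf]
  · simp [Walk.mem_support_append_iff]

lemma sub_path {a b u v : V} (p : T.Walk a b) (hu : u ∈ p.support) (hv : v ∈ p.support) :
    ∃ r : T.Walk u v, r.IsPath ∧ (∀ z ∈ r.support, z ∈ p.support) ∧
      ∀ f ∈ r.edges, f ∈ p.edges := by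
  classical
  refine ⟨((p.takeUntil u hu).reverse.append (p.takeUntil v hv)).bypass, Walk.bypass_isPath _,
    ?_, ?_⟩
  · intro z hz
    have := Walk.support_bypass_subset_support _ hz
    rw [Walk.mem_support_append_iff, Walk.support_reverse, List.mem_reverse] at this
    rcases this with h | h
    · exact Walk.support_takeUntil_subset_support _ _ h
    · exact Walk.support_takeUntil_subset_support _ _ h
  · intro f hf
    have := Walk.edges_bypass_subset_edges _ hf
    rw [Walk.edges_append, List.mem_append, Walk.edges_reverse, List.mem_reverse] at this
    rcases this with h | h
    · exact Walk.edges_takeUntil_subset_edges _ _ h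
    · exact Walk.edges_takeUntil_subset_edges _ _ h

lemma cycVerts_eq (hT : T.IsTree) {a b : V} {p : T.Walk a b} (hp : p.IsPath) :
    cycVerts T s(a, b) = {v | v ∈ p.support} := by
  ext v
  constructor
  · rintro ⟨x, y, hxy, r, hr, hv⟩
    rw [Sym2.eq_iff] at hxy
    rcases hxy with ⟨rfl, rfl⟩ | ⟨rfl, rfl⟩
    · rw [path_eq_aux hT hr hp] at hv
      exact hv
    · rw [path_eq_aux hT hr hp.reverse] at hv
      simpa using hv
  · intro hv
    exact ⟨a, b, rfl, p, hp, hv⟩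

lemma cycEdges_tree (hT : T.IsTree) {a b : V} {p : T.Walk a b} (hp : p.IsPath)
    (hab : s(a, b) ∉ T.edgeSet) (f : Sym2 V) :
    (f ∈ cycEdges T s(a, b) ∧ f ∈ T.edgeSet) ↔ f ∈ p.edges := by
  constructor
  · rintro ⟨h | ⟨x, y, hxy, r, hr, hv⟩, hf⟩
    · subst h
      exact absurd hf hab
    rw [Sym2.eq_iff] at hxy
    rcases hxy with ⟨rfl, rfl⟩ | ⟨rfl, rfl⟩
    · rw [path_eq_aux hT hr hp] at hv
      exact hv
    · rw [path_eq_aux hT hr hp.reverse] at hv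
      simpa using hv
  · intro hf
    exact ⟨Or.inr ⟨a, b, rfl, p, hp, hf⟩, Walk.edges_subset_edgeSet p hf⟩

lemma PConv_cycVerts (hT : T.IsTree) (e : Sym2 V) : PConv T (cycVerts T e) := by
  induction e with | _ a b
  obtain ⟨p, hp, -⟩ := hT.connected.exists_path_of_dist a b
  rw [cycVerts_eq hT hp]
  intro u hu v hv
  obtain ⟨r, hr, h, -⟩ := sub_path p hu hv
  exact ⟨r, hr, h⟩

lemma transit_iff (hT : T.IsTree) {e : Sym2 V} (he : e ∉ T.edgeSet) {x y a b : V}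
    (hx : x ∉ cycVerts T e) (hy : y ∉ cycVerts T e) (ha : Gate T (cycVerts T e) x a)
    (hb : Gate T (cycVerts T e) y b) :
    (s(x, y) ∉ T.edgeSet ∧ cyclesIntersect T e s(x, y)) ↔ a ≠ b := by
  have hC := PConv_cycVerts hT e
  induction e with | _ a0 b0
  obtain ⟨p, hp, -⟩ := hT.connected.exists_path_of_dist a0 b0
  have hCe := cycVerts_eq hT hp
  constructor
  · rintro ⟨hxy, f, ⟨hf1, hf2⟩, hf3⟩ rfl
    obtain ⟨r, hr, -⟩ := hT.connected.exists_path_of_dist x y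
    have h1 := (cycEdges_tree hT hp he f).1 ⟨hf1, hf3⟩
    have h2 := (cycEdges_tree hT hr hxy f).1 ⟨hf2, hf3⟩
    have key : ∀ u, u ∈ p.support → u ∈ r.support → u = a := by
      intro u hu hu'
      have huC : u ∈ cycVerts T s(a0, b0) := by rw [hCe]; exact hu
      have e1 := gate_dist hT hC ha huC
      have e2 := gate_dist hT hC hb huC
      have e3 := dist_mem_aux hT hr hu'
      have e4 := hT.connected.dist_triangle (u := x) (v := a) (w := y)
      rw [T.dist_comm (u := u) (v := y)] at e3
      rw [T.dist_comm (u := a) (v := y)] at e4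
      have : T.dist a u = 0 := by omega
      exact ((hT.connected.dist_eq_zero_iff).1 this).symm
    induction f with | _ u v
    have hu := key u (p.fst_mem_support_of_mem_edges h1) (r.fst_mem_support_of_mem_edges h2)
    have hv := key v (p.snd_mem_support_of_mem_edges h1) (r.snd_mem_support_of_mem_edges h2)
    have : T.Adj u v := hf3
    exact this.ne (hu.trans hv.symm)
  · intro hab
    have haC := ha.1
    have hbC := hb.1
    rw [hCe] at haC hbC
    obtain ⟨r, hr, -, hre⟩ := sub_path p haC hbC
    obtain ⟨s, hs, hse, has⟩ := through_path hT hC ha hb hab hr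
    have hxy : s(x, y) ∉ T.edgeSet := by
      intro h
      have h : T.Adj x y := h
      have e1 := dist_mem_aux hT hs has
      have e2 : T.dist x y = 1 := dist_eq_one_iff_adj.2 h
      have e3 : 0 < T.dist x a := hT.connected.pos_dist_of_ne (fun h => hx (h ▸ ha.1))
      have e4 : 0 < T.dist a y := hT.connected.pos_dist_of_ne (fun h => hy (h ▸ ha.1))
      omega
    refine ⟨hxy, ?_⟩
    have hne : r.edges ≠ [] := by
      intro h
      cases r with
      | nil => exact hab rfl
      | cons h p => simp at h
    obtain ⟨f, hf⟩ := List.exists_mem_of_ne_nil _ hne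
    have h1 := (cycEdges_tree hT hp he f).2 (hre f hf)
    have h2 := (cycEdges_tree hT hs hxy f).2 (hse f hf)
    exact ⟨f, ⟨h1.1, h2.1⟩, h1.2⟩

end helpers

/-- In the complete graph `K_n`, for a spanning tree `T` and a tree-cycle
`c` of length `k` with vertices `w 1, …, w k` and `q i = |closest-point-set(w i, c)|`,
the number of transit tree-cycles (no endpoint of the inducing cycle-edge on `c`) having
non-empty intersection with `c` equals `Σ_{i<j} q i * q j = (1/2) Σ_i q i * (n - k - q i)`. -/
theorem stmt_3 {V : Type*} [Fintype V] (n : ℕ) (hn : Fintype.card V = n)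
    (T : SimpleGraph V) (hle : T ≤ (⊤ : SimpleGraph V)) (hT : T.IsTree)
    (e : Sym2 V) (he : e ∈ (⊤ : SimpleGraph V).edgeSet \ T.edgeSet)
    (k : ℕ) (hk : (cycVerts T e).ncard = k)
    (w : Fin k → V) (hw : Set.BijOn w Set.univ (cycVerts T e))
    (q : Fin k → ℕ) (hq : ∀ i, q i = (closestPointSet T e (w i)).ncard) :
    (({f | f ∈ (⊤ : SimpleGraph V).edgeSet \ T.edgeSet ∧ f ≠ e ∧ cyclesIntersect T e f ∧
        ∀ x ∈ f, x ∉ cycVerts T e} : Set (Sym2 V)).ncard : ℚ)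
      = ∑ i : Fin k, ∑ j : Fin k, (if i < j then (q i : ℚ) * (q j : ℚ) else 0) ∧
    (∑ i : Fin k, ∑ j : Fin k, (if i < j then (q i : ℚ) * (q j : ℚ) else 0))
      = (1 / 2) * ∑ i : Fin k, (q i : ℚ) * ((n : ℚ) - (k : ℚ) - (q i : ℚ)) := by
  classical
  have hC := PConv_cycVerts hT e
  have hne : (cycVerts T e).Nonempty := by
    induction e with | _ a b
    obtain ⟨p, hp, -⟩ := hT.connected.exists_path_of_dist a b
    exact ⟨a, by rw [cycVerts_eq hT hp]; exact p.start_mem_support⟩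
  have hwC : ∀ i, w i ∈ cycVerts T e := fun i => hw.mapsTo (Set.mem_univ i)
  have hwinj : Function.Injective w := Set.injOn_univ.1 hw.injOn
  let Q : Fin k → Finset V := fun i => (closestPointSet T e (w i)).toFinset
  have hQ : ∀ i v, v ∈ Q i ↔ v ∉ cycVerts T e ∧ Gate T (cycVerts T e) v (w i) := by
    intro i v
    refine Set.mem_toFinset.trans ?_
    exact ⟨fun h => ⟨h.1, hwC i, h.2⟩, fun h => ⟨h.1, h.2.2⟩⟩
  have hqQ : ∀ i, q i = (Q i).card := fun i => by
    rw [hq i, Set.ncard_eq_toFinset_card']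
  have hex : ∀ v, v ∉ cycVerts T e → ∃ i, v ∈ Q i := by
    intro v hv
    obtain ⟨u, hu⟩ := gate_exists T hne v
    obtain ⟨i, -, rfl⟩ := hw.surjOn hu.1
    exact ⟨i, (hQ i v).2 ⟨hv, hu⟩⟩
  have hun : ∀ v i j, v ∈ Q i → v ∈ Q j → i = j := by
    intro v i j hi hj
    exact hwinj (gate_unique hT hC ((hQ i v).1 hi).2 ((hQ j v).1 hj).2)
  constructor
  · let P : Finset (Σ _ : Fin k × Fin k, V × V) :=
      (Finset.univ.filter (fun ij : Fin k × Fin k => ij.1 < ij.2)).sigma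
        (fun ij => Q ij.1 ×ˢ Q ij.2)
    have hP : ∀ z, z ∈ P ↔ z.1.1 < z.1.2 ∧ z.2.1 ∈ Q z.1.1 ∧ z.2.2 ∈ Q z.1.2 := by
      intro z
      simp [P, Finset.mem_sigma]
    have hS : ({f | f ∈ (⊤ : SimpleGraph V).edgeSet \ T.edgeSet ∧ f ≠ e ∧ cyclesIntersect T e f ∧
        ∀ x ∈ f, x ∉ cycVerts T e} : Set (Sym2 V)) =
        ((P.image (fun z => s(z.2.1, z.2.2)) : Finset (Sym2 V)) : Set (Sym2 V)) := by
      ext f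
      simp only [Finset.coe_image, Set.mem_image, Finset.mem_coe, Set.mem_ofPred_eq]
      constructor
      · rintro ⟨⟨-, hf1⟩, -, hf2, hf3⟩
        induction f with | _ x y
        have hx := hf3 x (by simp)
        have hy := hf3 y (by simp)
        obtain ⟨i, hi⟩ := hex x hx
        obtain ⟨j, hj⟩ := hex y hy
        have hij := (transit_iff hT he.2 hx hy ((hQ i x).1 hi).2 ((hQ j y).1 hj).2).1 ⟨hf1, hf2⟩
        have hij : i ≠ j := fun h => hij (congrArg w h)
        rcases lt_or_gt_of_ne hij with h | h
        · exact ⟨⟨(i, j), (x, y)⟩, (hP _).2 ⟨h, hi, hj⟩, rfl⟩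
        · exact ⟨⟨(j, i), (y, x)⟩, (hP _).2 ⟨h, hj, hi⟩, Sym2.eq_swap⟩
      · rintro ⟨⟨⟨i, j⟩, ⟨x, y⟩⟩, hz, rfl⟩
        obtain ⟨hij, hx, hy⟩ := (hP _).1 hz
        simp only at hij hx hy ⊢
        have hx' := (hQ i x).1 hx
        have hy' := (hQ j y).1 hy
        obtain ⟨h1, h2⟩ := (transit_iff hT he.2 hx'.1 hy'.1 hx'.2 hy'.2).2
          (fun h => hij.ne (hwinj h))
        refine ⟨⟨?_, h1⟩, ?_, h2, ?_⟩
        · rw [mem_edgeSet, top_adj]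
          rintro rfl
          exact hij.ne (hun _ _ _ hx hy)
        · rintro rfl
          obtain ⟨p, hp, -⟩ := hT.connected.exists_path_of_dist x y
          exact hx'.1 (by rw [cycVerts_eq hT hp]; exact p.start_mem_support)
        · intro z hz
          rcases Sym2.mem_iff.1 hz with rfl | rfl
          · exact hx'.1
          · exact hy'.1
    rw [hS, Set.ncard_coe_finset, Finset.card_image_of_injOn]
    · rw [Finset.card_sigma, Finset.sum_filter, Fintype.sum_prod_type]
      push_cast
      refine Finset.sum_congr rfl fun i _ => Finset.sum_congr rfl fun j _ => ?_
      simp only [hqQ, Finset.card_product]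
      split_ifs <;> simp
    · rintro ⟨⟨i, j⟩, ⟨x, y⟩⟩ hz ⟨⟨i', j'⟩, ⟨x', y'⟩⟩ hz' h
      obtain ⟨hij, hx, hy⟩ := (hP _).1 hz
      obtain ⟨hij', hx', hy'⟩ := (hP _).1 hz'
      simp only at hij hx hy hij' hx' hy' h
      rcases Sym2.eq_iff.1 h with ⟨rfl, rfl⟩ | ⟨rfl, rfl⟩
      · rw [hun _ _ _ hx hx', hun _ _ _ hy hy']
      · have h1 := hun _ _ _ hx hy'
        have h2 := hun _ _ _ hy hx'
        subst h1 h2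
        exact absurd hij' hij.asymm
  · have hsum : ((n : ℚ) - k) = ∑ i, (q i : ℚ) := by
      have h1 : (cycVerts T e)ᶜ.ncard = ∑ i, q i := by
        have : (cycVerts T e)ᶜ = ((Finset.univ.biUnion Q : Finset V) : Set V) := by
          ext v
          simp only [Set.mem_compl_iff, Finset.coe_biUnion, Set.mem_iUnion, Finset.mem_coe,
            Finset.mem_univ]
          constructor
          · intro hv
            obtain ⟨i, hi⟩ := hex v hv
            exact ⟨i, trivial, hi⟩
          · rintro ⟨i, -, hi⟩
            exact ((hQ i v).1 hi).1
        rw [this, Set.ncard_coe_finset, Finset.card_biUnion]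
        · exact Finset.sum_congr rfl fun i _ => (hqQ i).symm
        · intro i _ j _ hij
          refine Finset.disjoint_left.2 ?_
          exact fun v hi hj => hij (hun v i j hi hj)
      have h2 := Set.ncard_add_ncard_compl (cycVerts T e)
      rw [hk, h1, Nat.card_eq_fintype_card, hn] at h2
      rw [← h2]
      push_cast
      ring
    rw [hsum]
    have hswap : (∑ i : Fin k, ∑ j : Fin k, (if i < j then (q i : ℚ) * (q j : ℚ) else 0)) =
        ∑ i : Fin k, ∑ j : Fin k, (if j < i then (q i : ℚ) * (q j : ℚ) else 0) := by
      rw [Finset.sum_comm]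
      refine Finset.sum_congr rfl fun i _ => Finset.sum_congr rfl fun j _ => ?_
      rw [mul_comm]
    have hall : ∑ i : Fin k, (q i : ℚ) * ((∑ j, (q j : ℚ)) - (q i : ℚ)) =
        (∑ i : Fin k, ∑ j : Fin k, (if i < j then (q i : ℚ) * (q j : ℚ) else 0)) +
        ∑ i : Fin k, ∑ j : Fin k, (if j < i then (q i : ℚ) * (q j : ℚ) else 0) := by
      rw [← Finset.sum_add_distrib]
      refine Finset.sum_congr rfl fun i _ => ?_
      rw [← Finset.sum_add_distrib, mul_sub, Finset.mul_sum, sub_eq_iff_eq_add]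
      have : (q i : ℚ) * q i = ∑ j : Fin k, if j = i then (q i : ℚ) * q j else 0 := by simp
      rw [this, ← Finset.sum_add_distrib]
      refine Finset.sum_congr rfl fun j _ => ?_
      rcases lt_trichotomy i j with h | h | h
      · simp [h, h.asymm, h.ne']
      · simp [h]
      · simp [h, h.asymm, h.ne]
    rw [hall, ← hswap]
    ring
end

section
/- Let G = K_n be the complete graph on n vertices, T a spanning tree of G, and c a tree-cycle of T of length k with vertices w_1, …, w_k, and let q_i = |closest-point-set(w_i, c)|. Then the cycle intersection number of c satisfies ∩_T(c) = k(k-3)/2 + (n-k)(k-1) + (1/2) Σ_{i=1}^{k} q_i (n - k - q_i). -/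
open SimpleGraph

section helpers

variable {V : Type*} {T : SimpleGraph V}

lemma aux_pathEdges (hT : T.IsTree) {x y : V} (p : T.Walk x y) (hp : p.IsPath) :
    pathEdges T x y = {f | f ∈ p.edges} := by
  ext f
  constructor
  · rintro ⟨p', hp', hf⟩
    have : p' = p := congrArg Subtype.val (hT.IsAcyclic.path_unique ⟨p', hp'⟩ ⟨p, hp⟩)
    subst this
    exact hf
  · intro hf
    exact ⟨p, hp, hf⟩

lemma aux_cycEdges (hT : T.IsTree) {x y : V} (p : T.Walk x y) (hp : p.IsPath)
    (f : Sym2 V) (hf : f ∈ T.edgeSet) (hxy : s(x, y) ∉ T.edgeSet) :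
    f ∈ cycEdges T s(x, y) ↔ f ∈ p.edges := by
  constructor
  · rintro (h | ⟨x', y', h, hf'⟩)
    · exact absurd (h ▸ hf) hxy
    · rcases Sym2.eq_iff.1 h with ⟨rfl, rfl⟩ | ⟨rfl, rfl⟩
      · rw [aux_pathEdges hT p hp] at hf'
        exact hf'
      · rw [aux_pathEdges hT p.reverse hp.reverse] at hf'
        simpa using hf'
  · intro h
    exact Or.inr ⟨x, y, rfl, p, hp, h⟩

lemma aux_cycVerts (hT : T.IsTree) {x y : V} (p : T.Walk x y) (hp : p.IsPath) (v : V) :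
    v ∈ cycVerts T s(x, y) ↔ v ∈ p.support := by
  constructor
  · rintro ⟨x', y', h, p', hp', hv⟩
    rcases Sym2.eq_iff.1 h with ⟨rfl, rfl⟩ | ⟨rfl, rfl⟩
    · have : p' = p := congrArg Subtype.val (hT.IsAcyclic.path_unique ⟨p', hp'⟩ ⟨p, hp⟩)
      subst this
      exact hv
    · have : p' = p.reverse :=
        congrArg Subtype.val (hT.IsAcyclic.path_unique ⟨p', hp'⟩ ⟨p.reverse, hp.reverse⟩)
      subst this
      simpa using hv
  · intro h
    exact ⟨x, y, rfl, p, hp, h⟩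

/-- reachability after deleting edges vs. the tree path -/
lemma aux_reach (hT : T.IsTree) (E : Set (Sym2 V)) {x y : V} (p : T.Walk x y) (hp : p.IsPath) :
    (T.deleteEdges E).Reachable x y ↔ ∀ f ∈ p.edges, f ∉ E := by
  constructor
  · intro h
    obtain ⟨r, hr⟩ := h.exists_isPath
    have hr' : (r.mapLe (T.deleteEdges_le E)).IsPath := (Walk.isPath_mapLe _).2 hr
    have : p = r.mapLe (T.deleteEdges_le E) :=
      congrArg Subtype.val (hT.IsAcyclic.path_unique ⟨p, hp⟩ ⟨_, hr'⟩)
    intro f hf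
    rw [this, Walk.edges_mapLe_eq_edges] at hf
    have := r.edges_subset_edgeSet hf
    rw [edgeSet_deleteEdges] at this
    exact this.2
  · intro h
    exact ⟨p.toDeleteEdges E h⟩

lemma aux_first {a b : V} (P : T.Walk a b) {v u : V} (p : T.Walk v u) (hu : u ∈ P.support) :
    ∃ w ∈ P.support, (T.deleteEdges {f | f ∈ P.edges}).Reachable v w ∧
      (w = u ∨ ∃ r : T.Walk v w, r.length < p.length) := by
  induction p with
  | nil => exact ⟨_, hu, Reachable.refl _, Or.inl rfl⟩
  | @cons v v' u h p ih =>
    by_cases hv : v ∈ P.support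
    · exact ⟨v, hv, Reachable.refl _, Or.inr ⟨Walk.nil, by simp⟩⟩
    · obtain ⟨w, hw, hr, h'⟩ := ih hu
      refine ⟨w, hw, Reachable.trans (Adj.reachable ?_) hr, ?_⟩
      · rw [deleteEdges_adj]
        exact ⟨h, fun hh => hv (P.fst_mem_support_of_mem_edges hh)⟩
      · rcases h' with h' | ⟨r, hr⟩
        · exact Or.inl h'
        · exact Or.inr ⟨Walk.cons h r, by simpa using hr⟩

lemma aux_nil {a b u v : V} (hT : T.IsTree) (P : T.Walk a b) (r : T.Walk u v)
    (hr : r.IsPath) (hs : ∀ f ∈ r.edges, f ∈ P.edges)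
    (h : (T.deleteEdges {f | f ∈ P.edges}).Reachable u v) : u = v := by
  rw [aux_reach hT _ r hr] at h
  cases r with
  | nil => rfl
  | cons h' p => exact absurd (hs s(u, _) (List.mem_cons_self)) (h s(u, _) (List.mem_cons_self))

lemma aux_uniq (hT : T.IsTree) {a b : V} (P : T.Walk a b) (hP : P.IsPath) {u v : V}
    (hu : u ∈ P.support) (hv : v ∈ P.support)
    (h : (T.deleteEdges {f | f ∈ P.edges}).Reachable u v) : u = v := by
  classical
  have hu' := hu
  rw [← P.take_spec hv, Walk.mem_support_append_iff] at hu'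
  rcases hu' with hu' | hu'
  · refine aux_nil hT P ((P.takeUntil v hv).dropUntil u hu') ((hP.takeUntil hv).dropUntil hu') ?_ h
    intro f hf
    exact P.edges_takeUntil_subset_edges hv (Walk.edges_dropUntil_subset_edges _ hu' hf)
  · refine (aux_nil hT P ((P.dropUntil v hv).takeUntil u hu') ((hP.dropUntil hv).takeUntil hu') ?_ h.symm).symm
    intro f hf
    exact P.edges_dropUntil_subset_edges hv (Walk.edges_takeUntil_subset_edges _ hu' hf)

lemma aux_closest (hT : T.IsTree) {a b : V} (P : T.Walk a b) (hP : P.IsPath) {v w : V}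
    (hw : w ∈ P.support) :
    (T.deleteEdges {f | f ∈ P.edges}).Reachable v w ↔
      ∀ u ∈ P.support, T.dist v w ≤ T.dist v u := by
  constructor
  · intro h u hu
    obtain ⟨p, hp⟩ := (hT.connected v u).exists_walk_length_eq_dist
    obtain ⟨w', hw', hr, h'⟩ := aux_first P p hu
    have : w' = w := aux_uniq hT P hP hw' hw (hr.symm.trans h)
    subst this
    rcases h' with rfl | ⟨r, hr⟩
    · exact le_rfl
    · have := dist_le r
      omega
  · intro h
    obtain ⟨p, hp⟩ := (hT.connected v w).exists_walk_length_eq_dist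
    obtain ⟨w', hw', hr, h'⟩ := aux_first P p hw
    rcases h' with rfl | ⟨r, hr'⟩
    · exact hr
    · have := dist_le r
      have := h w' hw'
      omega

end helpers

/-- In the complete graph `K_n`, for a spanning tree `T` and a tree-cycle
`c` of length `k` with vertices `w 1, …, w k` and `q i = |closest-point-set(w i, c)|`,
the cycle intersection number of `c` is
`∩_T(c) = k(k-3)/2 + (n-k)(k-1) + (1/2) Σ_i q i (n - k - q i)`. -/
theorem stmt_4 {V : Type*} [Fintype V] (n : ℕ) (hn : Fintype.card V = n)
    (T : SimpleGraph V) (hle : T ≤ (⊤ : SimpleGraph V)) (hT : T.IsTree)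
    (e : Sym2 V) (he : e ∈ (⊤ : SimpleGraph V).edgeSet \ T.edgeSet)
    (k : ℕ) (hk : (cycVerts T e).ncard = k)
    (w : Fin k → V) (hw : Set.BijOn w Set.univ (cycVerts T e))
    (q : Fin k → ℕ) (hq : ∀ i, q i = (closestPointSet T e (w i)).ncard) :
    (cycleInterNum (⊤ : SimpleGraph V) T e : ℚ)
      = (k : ℚ) * ((k : ℚ) - 3) / 2 + ((n : ℚ) - (k : ℚ)) * ((k : ℚ) - 1)
        + (1 / 2) * ∑ i : Fin k, (q i : ℚ) * ((n : ℚ) - (k : ℚ) - (q i : ℚ)) := by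
  classical
  subst hn
  induction e using Sym2.ind with | _ a b =>
  obtain ⟨P, hP⟩ := (hT.connected a b).exists_isPath
  obtain ⟨hab, heT⟩ := he
  have hab : a ≠ b := by simpa using hab
  set H := T.deleteEdges {f | f ∈ P.edges} with hH
  have hC : ∀ v, v ∈ cycVerts T s(a, b) ↔ v ∈ P.support := aux_cycVerts hT P hP
  have hwC : ∀ i, w i ∈ P.support := fun i => (hC _).1 (hw.1 (Set.mem_univ i))
  have hinj : Function.Injective w := Set.injOn_univ.1 hw.2.1
  have hsurj : ∀ v ∈ P.support, ∃ i, w i = v := fun v hv => by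
    obtain ⟨i, -, hi⟩ := hw.2.2 ((hC v).2 hv)
    exact ⟨i, hi⟩
  have hex : ∀ v, ∃ i, H.Reachable v (w i) := by
    intro v
    obtain ⟨p⟩ := hT.connected v a
    obtain ⟨u, hu, hr, -⟩ := aux_first P p P.start_mem_support
    obtain ⟨i, rfl⟩ := hsurj u hu
    exact ⟨i, hr⟩
  choose c hc using hex
  have hcw : ∀ v i, H.Reachable v (w i) ↔ c v = i := by
    intro v i
    constructor
    · intro h
      exact hinj (aux_uniq hT P hP (hwC _) (hwC _) ((hc v).symm.trans h))
    · rintro rfl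
      exact hc v
  have hcc : ∀ x y, H.Reachable x y ↔ c x = c y := by
    intro x y
    constructor
    · intro h
      exact (hcw x (c y)).1 (h.trans (hc y))
    · intro h
      exact (hc x).trans (h ▸ (hc y).symm)
  have hcwi : ∀ i, c (w i) = i := fun i => (hcw _ _).1 (Reachable.refl _)
  have hfib : ∀ i, (Finset.univ.filter (fun v => c v = i)).card = q i + 1 := by
    intro i
    have : ((Finset.univ.filter (fun v => c v = i) : Finset V) : Set V)
        = insert (w i) (closestPointSet T s(a, b) (w i)) := by
      ext v
      have key : (∀ u ∈ cycVerts T s(a, b), T.dist v (w i) ≤ T.dist v u) ↔ c v = i := by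
        rw [← hcw, aux_closest hT P hP (hwC i)]
        simp only [hC]
      simp only [Finset.coe_filter, Finset.mem_univ, true_and, Set.mem_setOf_eq,
        Set.mem_insert_iff, closestPointSet, key]
      constructor
      · intro h
        by_cases hv : v ∈ P.support
        · obtain ⟨j, rfl⟩ := hsurj v hv
          rw [hcwi] at h
          exact Or.inl (h ▸ rfl)
        · exact Or.inr ⟨fun h' => hv ((hC v).1 h'), h⟩
      · rintro (rfl | h)
        · exact hcwi i
        · exact h.2
    rw [← Set.ncard_coe_finset, this, Set.ncard_insert_of_notMem, hq]
    intro h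
    exact h.1 ((hC _).2 (hwC i))
  have hsum : ∑ i, (q i + 1) = Fintype.card V := by
    rw [← Finset.card_univ, Finset.card_eq_sum_card_fiberwise (f := c) (t := Finset.univ)
      (fun _ _ => by simp)]
    exact Finset.sum_congr rfl fun i _ => (hfib i).symm
  -- the graph of pairs with distinct projections
  let D : SimpleGraph V :=
    { Adj := fun x y => c x ≠ c y
      symm := ⟨fun _ _ h => Ne.symm h⟩
      loopless := ⟨fun _ h => h rfl⟩ }
  have hD : ∀ x y, D.Adj x y ↔ c x ≠ c y := fun _ _ => Iff.rfl
  have hdeg : ∀ x, D.degree x + (q (c x) + 1) = Fintype.card V := by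
    intro x
    rw [← hfib, ← Finset.card_univ, ← card_neighborFinset_eq_degree,
      ← Finset.card_filter_add_card_filter_not (s := Finset.univ) (fun v => c v = c x), add_comm]
    congr 2
    ext y
    simp [hD, eq_comm]
  have hDE : 2 * (D.edgeFinset.card : ℚ)
      = ∑ i, ((q i : ℚ) + 1) * ((Fintype.card V : ℚ) - ((q i : ℚ) + 1)) := by
    have h1 : (2 * (D.edgeFinset.card : ℚ)) = ∑ x, (D.degree x : ℚ) := by
      exact_mod_cast D.sum_degrees_eq_twice_card_edges.symm
    rw [h1, ← Finset.sum_fiberwise_of_maps_to (g := c) (t := Finset.univ) (fun _ _ => by simp)]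
    refine Finset.sum_congr rfl fun i _ => ?_
    rw [Finset.sum_congr rfl (g := fun _ => (Fintype.card V : ℚ) - ((q i : ℚ) + 1)),
      Finset.sum_const, hfib]
    · simp
    · intro x hx
      have hx : c x = i := by simpa using hx
      have := hdeg x
      rw [hx] at this
      rw [← this]
      push_cast
      ring
  -- edges of the path
  have hPD : ∀ x y, s(x, y) ∈ P.edges → c x ≠ c y := by
    intro x y h heq
    have hx := P.fst_mem_support_of_mem_edges h
    have hy := P.snd_mem_support_of_mem_edges h
    have := aux_uniq hT P hP hx hy ((hcc x y).2 heq)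
    exact (P.adj_of_mem_edges h).ne this
  have hTD : ∀ x y, T.Adj x y → c x ≠ c y → s(x, y) ∈ P.edges := by
    intro x y h hne
    by_contra hn
    refine hne ((hcc x y).1 (Adj.reachable ?_))
    rw [hH, deleteEdges_adj]
    exact ⟨h, hn⟩
  have hinter : ∀ x y, s(x, y) ∉ T.edgeSet → (cyclesIntersect T s(a, b) s(x, y) ↔ c x ≠ c y) := by
    intro x y hxy
    obtain ⟨p, hp⟩ := (hT.connected x y).exists_isPath
    rw [Ne, ← hcc, hH, aux_reach hT _ p hp]
    push Not
    constructor
    · rintro ⟨f, ⟨h1, h2⟩, h3⟩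
      exact ⟨f, (aux_cycEdges hT p hp f h3 hxy).1 h2, (aux_cycEdges hT P hP f h3 heT).1 h1⟩
    · rintro ⟨f, h1, h2⟩
      have h3 := p.edges_subset_edgeSet h1
      exact ⟨f, ⟨(aux_cycEdges hT P hP f h3 heT).2 h2, (aux_cycEdges hT p hp f h3 hxy).2 h1⟩, h3⟩
  have hcab : c a ≠ c b := by
    intro h
    exact hab (aux_uniq hT P hP P.start_mem_support P.end_mem_support ((hcc a b).2 h))
  have hset : (D.edgeFinset : Set (Sym2 V)) = insert s(a, b)
      ({f | f ∈ (⊤ : SimpleGraph V).edgeSet \ T.edgeSet ∧ f ≠ s(a, b) ∧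
        cyclesIntersect T s(a, b) f} ∪ (P.edges.toFinset : Set (Sym2 V))) := by
    ext f
    induction f using Sym2.ind with | _ x y =>
    simp only [coe_edgeFinset, mem_edgeSet, hD, Set.mem_insert_iff, Set.mem_union,
      Set.mem_setOf_eq, Set.mem_diff, top_adj, Finset.mem_coe, List.mem_toFinset]
    constructor
    · intro h
      by_cases hT' : T.Adj x y
      · exact Or.inr (Or.inr (hTD x y hT' h))
      · by_cases hE : s(x, y) = s(a, b)
        · exact Or.inl hE
        · exact Or.inr (Or.inl ⟨⟨fun h' => h (h' ▸ rfl), hT'⟩, hE, (hinter x y hT').2 h⟩)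
    · rintro (h | h | h)
      · rcases Sym2.eq_iff.1 h with ⟨rfl, rfl⟩ | ⟨rfl, rfl⟩
        · exact hcab
        · exact hcab.symm
      · exact (hinter x y h.1.2).1 h.2.2
      · exact hPD x y h
  have hkl : P.length + 1 = k := by
    rw [← hk, ← P.length_support, ← List.toFinset_card_of_nodup hP.support_nodup,
      ← Set.ncard_coe_finset]
    congr 1
    ext v
    simp [hC]
  have hcard : D.edgeFinset.card = cycleInterNum (⊤ : SimpleGraph V) T s(a, b) + k := by
    rw [← Set.ncard_coe_finset, hset, Set.ncard_insert_of_notMem, Set.ncard_union_eq,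
      Set.ncard_coe_finset, List.toFinset_card_of_nodup hP.isTrail.edges_nodup, P.length_edges,
      add_assoc, hkl]
    · rfl
    · rw [Set.disjoint_left]
      intro f hf hf'
      exact hf.1.2 (P.edges_subset_edgeSet (by simpa using hf'))
    · rintro (h | h)
      · exact h.2.1 rfl
      · exact heT (P.edges_subset_edgeSet (by simpa using h))
  have hsumQ : ∑ i, (q i : ℚ) = (Fintype.card V : ℚ) - k := by
    rw [← hsum]
    push_cast
    simp [Finset.sum_add_distrib]
  have hexp : ∑ i, ((q i : ℚ) + 1) * ((Fintype.card V : ℚ) - ((q i : ℚ) + 1))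
      = ∑ i, (q i : ℚ) * ((Fintype.card V : ℚ) - (k : ℚ) - (q i : ℚ))
        + ((k : ℚ) - 2) * ∑ i, (q i : ℚ) + k * ((Fintype.card V : ℚ) - 1) := by
    have : (k : ℚ) * ((Fintype.card V : ℚ) - 1) = ∑ _i : Fin k, ((Fintype.card V : ℚ) - 1) := by
      simp [mul_sub]
    rw [this, Finset.mul_sum, ← Finset.sum_add_distrib, ← Finset.sum_add_distrib]
    exact Finset.sum_congr rfl fun i _ => by ring
  rw [hcard, hexp, hsumQ] at hDE
  push_cast at hDE
  linarith
end

section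
/- Let G = K_n be the complete graph on n vertices and let c be a cycle of G. Remove exactly one edge e of c, choose a vertex v of c, and let T be the spanning tree consisting of the edges of c - e together with a star centered at v on the vertices not in c. Then T is a spanning tree of G having c as a tree-cycle, and ∩_T(c) ≤ ∩_{T'}(c) for every spanning tree T' of G having c as a tree-cycle. -/
open SimpleGraph

def CycOpen {V : Type*} {G : SimpleGraph V} {a : V} (c : G.Walk a a) (e : Sym2 V) : Prop :=
  ∃ x y, ∃ q : G.Walk x y, q.IsPath ∧ e = s(x, y) ∧ e ∉ q.edges ∧
    (∀ g, g ∈ c.edges ↔ g = e ∨ g ∈ q.edges) ∧ ∀ w, w ∈ c.support ↔ w ∈ q.support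

lemma cycOpen_snd {V : Type*} {G : SimpleGraph V} {x : V} (c : G.Walk x x) (hc : c.IsCycle) :
    CycOpen c s(x, c.snd) := by
  cases c with
  | nil => simp at hc
  | cons h q =>
    rw [Walk.cons_isCycle_iff] at hc
    refine ⟨_, _, q, hc.1, ?_, ?_, ?_, ?_⟩
    · simp [Sym2.eq_swap]
    · simpa using hc.2
    · intro g; simp
    · intro w; simp only [Walk.support_cons, List.mem_cons]
      constructor
      · rintro (rfl | h)
        · simp
        · exact h
      · exact Or.inr

lemma cycOpen_of_mem {V : Type*} {G : SimpleGraph V} {a : V} (c : G.Walk a a) (hc : c.IsCycle)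
    (e : Sym2 V) (he : e ∈ c.edges) : CycOpen c e := by
  classical
  induction e with
  | _ x y =>
  have hx : x ∈ c.support := c.fst_mem_support_of_mem_edges he
  suffices h : CycOpen (c.rotate x hx) s(x, y) by
    obtain ⟨x', y', q, h1, h2, h3, h4, h5⟩ := h
    refine ⟨x', y', q, h1, h2, h3, ?_, ?_⟩
    · intro g; rw [← h4, (c.rotate_edges x hx).mem_iff]
    · intro w; rw [← h5, c.mem_support_rotate_iff]
  have hc' := hc.rotate (u := x) hx
  have he' : s(x, y) ∈ (c.rotate x hx).edges := (c.rotate_edges x hx).mem_iff.2 he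
  generalize c.rotate x hx = c' at *
  by_cases hy : y = c'.snd
  · rw [hy]; exact cycOpen_snd c' hc'
  · have : y = c'.reverse.snd := by
      cases c' with
      | nil => simp at hc'
      | cons h q =>
        have hq := ((Walk.cons_isCycle_iff _ _).1 hc').1
        simp only [Walk.snd_cons] at hy
        have : s(x, y) ∈ q.reverse.edges := by
          simp only [Walk.edges_cons, List.mem_cons, Walk.edges_reverse, List.mem_reverse] at he' ⊢
          rcases he' with h' | h'
          · exfalso; simp at h'; grind
          · exact h'
        have h2 := (q.isPath_reverse_iff.2 hq).eq_snd_of_mem_edges this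
        rw [h2, Walk.snd_reverse, Walk.snd_reverse]
        cases q with
        | nil => simp at this
        | cons h q => simp
    obtain ⟨x', y', q, h1, h2, h3, h4, h5⟩ := cycOpen_snd c'.reverse hc'.reverse
    rw [← this] at h2 h3 h4
    refine ⟨x', y', q, h1, h2, h3, ?_, ?_⟩
    · intro g; rw [← h4]; simp
    · intro g; rw [← h5]; simp

lemma tree_path_iff {V : Type*} {T : SimpleGraph V} (hT : T.IsAcyclic) (P : Set (Sym2 V)) {x y : V}
    (p : T.Walk x y) (hp : p.IsPath) :
    (∃ g ∈ p.edges, g ∈ P) ↔ ¬ (T.deleteEdges P).Reachable x y := by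
  classical
  constructor
  · rintro ⟨g, hg, hgP⟩ ⟨w⟩
    have hw := w.bypass_isPath
    have hw' := hw.mapLe (T.deleteEdges_le P)
    have := hT.subsingleton_path x y
    have h2 : p = w.bypass.mapLe (T.deleteEdges_le P) :=
      congrArg Subtype.val (Subsingleton.elim (⟨p, hp⟩ : T.Path x y) ⟨_, hw'⟩)
    rw [h2, Walk.edges_mapLe_eq_edges] at hg
    have := w.bypass.edges_subset_edgeSet hg
    simp at this
    exact this.2 hgP
  · intro h
    by_contra h2
    push Not at h2
    exact h ⟨p.toDeleteEdges P h2⟩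

lemma support_not_reach {V : Type*} {T : SimpleGraph V} (hT : T.IsAcyclic) {x y : V}
    (q : T.Walk x y) (z w : V) (hz : z ∈ q.support) (hw : w ∈ q.support)
    (h : (T.deleteEdges {g | g ∈ q.edges}).Reachable z w) : z = w := by
  classical
  let r := ((q.takeUntil z hz).reverse.append (q.takeUntil w hw))
  have hr : r.bypass.edges ⊆ q.edges := by
    intro g hg
    have := r.edges_bypass_subset_edges hg
    simp [r] at this
    rcases this with h | h
    · exact q.edges_takeUntil_subset_edges hz h
    · exact q.edges_takeUntil_subset_edges hw h
  have h1 := (tree_path_iff hT {g | g ∈ q.edges} r.bypass r.bypass_isPath).not_left.2 h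
  by_contra hne
  cases hb : r.bypass with
  | nil => exact hne rfl
  | cons hh q' =>
    rw [hb] at hr h1
    exact h1 ⟨s(z, _), List.mem_cons_self, hr List.mem_cons_self⟩

lemma cycEdges_eq {V : Type*} {T : SimpleGraph V} (hT : T.IsAcyclic) {x y : V}
    (q : T.Walk x y) (hq : q.IsPath) : cycEdges T s(x, y) = insert s(x, y) {g | g ∈ q.edges} := by
  unfold cycEdges pathEdges
  congr 1
  ext g
  simp only [Set.mem_ofPred_eq]
  constructor
  · rintro ⟨x', y', h, p, hp, hg⟩
    rcases Sym2.eq_iff.1 h with ⟨rfl, rfl⟩ | ⟨rfl, rfl⟩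
    · have := hT.subsingleton_path x y
      have h2 : p = q := congrArg Subtype.val (Subsingleton.elim (⟨p, hp⟩ : T.Path x y) ⟨_, hq⟩)
      rwa [← h2]
    · have := hT.subsingleton_path x y
      have h2 : p.reverse = q := congrArg Subtype.val
        (Subsingleton.elim (⟨p.reverse, p.isPath_reverse_iff.2 hp⟩ : T.Path x y) ⟨_, hq⟩)
      rw [← h2]; simpa using hg
  · intro h
    exact ⟨x, y, rfl, q, hq, h⟩

/-- edges of the complete graph whose ends are separated after deleting `P` from `T` -/
def sepEdges {V : Type*} (T : SimpleGraph V) (P : Set (Sym2 V)) : Set (Sym2 V) :=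
  {g | ∀ x y, g = s(x, y) → ¬ (T.deleteEdges P).Reachable x y}

lemma mem_sepEdges {V : Type*} (T : SimpleGraph V) (P : Set (Sym2 V)) (x y : V) :
    s(x, y) ∈ sepEdges T P ↔ ¬ (T.deleteEdges P).Reachable x y := by
  constructor
  · intro h; exact h x y rfl
  · intro h x' y' he
    rcases Sym2.eq_iff.1 he with ⟨rfl, rfl⟩ | ⟨rfl, rfl⟩
    · exact h
    · exact fun h' => h h'.symm

lemma interNum_add {V : Type*} [Finite V] {T : SimpleGraph V} (hT : T.IsTree) {x y : V}
    (q : T.Walk x y) (hq : q.IsPath) (he : s(x, y) ∈ (⊤ : SimpleGraph V).edgeSet \ T.edgeSet) :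
    cycleInterNum (⊤ : SimpleGraph V) T s(x, y) + (cycEdges T s(x, y)).ncard
      = (sepEdges T {g | g ∈ q.edges}).ncard := by
  unfold cycleInterNum
  have hxy : x ≠ y := by simpa using he.1
  rw [← Set.ncard_union_eq]
  · congr 1
    ext g
    induction g with
    | _ z w =>
    rw [mem_sepEdges]
    obtain ⟨p, hp, -⟩ := hT.existsUnique_path z w
    rw [← tree_path_iff hT.isAcyclic _ p hp]
    simp only [cyclesIntersect, cycEdges_eq hT.isAcyclic q hq]
    have hz := cycEdges_eq hT.isAcyclic p hp
    constructor
    · rintro (⟨h1, h2, ⟨g, ⟨hg1, hg2⟩, hg3⟩⟩ | h)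
      · refine ⟨g, ?_, ?_⟩
        · rw [hz] at hg2
          rcases hg2 with rfl | h
          · exact absurd hg3 h1.2
          · exact h
        · rcases hg1 with rfl | h
          · exact absurd hg3 he.2
          · exact h
      · rw [tree_path_iff hT.isAcyclic _ p hp, ← mem_sepEdges]
        rcases h with h | h
        · rw [h, mem_sepEdges, ← tree_path_iff hT.isAcyclic _ q hq]
          cases q with
          | nil => exact absurd rfl hxy
          | cons hh q' => exact ⟨s(x, _), List.mem_cons_self, List.mem_cons_self⟩
        · have hadj : T.Adj z w := q.adj_of_mem_edges h
          rw [mem_sepEdges, ← tree_path_iff hT.isAcyclic _ hadj.toWalk (by simp [hadj.ne])]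
          exact ⟨s(z, w), by simp, h⟩
    · rintro ⟨g, hg1, hg2⟩
      by_cases h1 : s(z, w) = s(x, y)
      · right; left; exact h1
      by_cases h2 : s(z, w) ∈ T.edgeSet
      · right; right
        have hadj : T.Adj z w := h2
        have := hT.isAcyclic.subsingleton_path z w
        have h3 : p = hadj.toWalk := congrArg Subtype.val
          (Subsingleton.elim (⟨p, hp⟩ : T.Path z w) ⟨_, by simp [hadj.ne]⟩)
        rw [h3] at hg1
        simp at hg1
        rwa [← hg1]
      · left
        refine ⟨⟨?_, h2⟩, h1, g, ⟨Or.inr hg2, hz ▸ Or.inr hg1⟩, p.edges_subset_edgeSet hg1⟩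
        rintro h
        simp at h
        subst h
        rw [Walk.isPath_iff_nil] at hp
        rw [Walk.edges_eq_nil.2 hp] at hg1
        simp at hg1
  · rw [Set.disjoint_left]
    rintro g ⟨h1, h2, -⟩ h3
    rw [cycEdges_eq hT.isAcyclic q hq] at h3
    rcases h3 with h3 | h3
    · exact h2 h3
    · exact h1.2 (q.edges_subset_edgeSet h3)

lemma sep_le {V : Type*} [Finite V] {T T' : SimpleGraph V} {P P' : Set (Sym2 V)} (C : Set V) (v : V)
    (hv : v ∈ C) (h : ∀ u, u ∉ C → (T.deleteEdges P).Reachable v u)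
    (h' : ∀ z ∈ C, ∀ w ∈ C, (T'.deleteEdges P').Reachable z w → z = w) :
    (sepEdges T P).ncard ≤ (sepEdges T' P').ncard := by
  rw [Set.ncard_le_ncard_iff_ncard_sdiff_le_ncard_sdiff]
  have key : ∀ g, g ∈ sepEdges T P \ sepEdges T' P' → ∃ x u, g = s(x, u) ∧ x ∈ C ∧ x ≠ v ∧ u ∉ C ∧
      (T'.deleteEdges P').Reachable x u := by
    intro g
    induction g with
    | _ x u =>
    rintro ⟨h1, h2⟩
    rw [mem_sepEdges] at h1 h2
    push Not at h2
    by_cases hx : x ∈ C <;> by_cases hu : u ∈ C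
    · rw [h' x hx u hu h2] at h1
      exact absurd (SimpleGraph.Reachable.refl _) h1
    · refine ⟨x, u, rfl, hx, ?_, hu, h2⟩
      rintro rfl; exact h1 (h u hu)
    · refine ⟨u, x, Sym2.eq_swap, hu, ?_, hx, h2.symm⟩
      rintro rfl; exact h1 (h x hx).symm
    · exact absurd ((h x hx).symm.trans (h u hu)) h1
  have : Nonempty V := ⟨v⟩
  choose! a b hab using key
  apply Set.ncard_le_ncard_of_injOn (fun g => s(v, b g))
  · intro g hg
    obtain ⟨h1, h2, h3, h4, h5⟩ := hab g hg
    refine ⟨?_, ?_⟩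
    · rw [mem_sepEdges]
      intro h6
      exact h3 (h' _ h2 _ hv (h5.trans h6.symm))
    · rw [mem_sepEdges]; push Not; exact h _ h4
  · intro g hg k hk hgk
    obtain ⟨h1, h2, h3, h4, h5⟩ := hab g hg
    obtain ⟨i1, i2, i3, i4, i5⟩ := hab k hk
    have hb : b g = b k := by
      have : b g = b k ∨ v = b k ∧ b g = v := by simpa using hgk
      grind
    rw [h1, i1, hb, h' _ h2 _ i2 (h5.trans (hb ▸ i5.symm))]

/-- In the complete graph `K_n`, given a cycle `c`, remove one edge `e` of
`c`, choose a vertex `v` of `c`, and let `T` consist of the edges of `c - e` together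
with a star centered at `v` on the vertices not in `c`. Then `T` is a spanning tree of
`G` having `c` as a tree-cycle (induced by the cycle-edge `e`), and
`∩_T(c) ≤ ∩_{T'}(c)` for every spanning tree `T'` of `G` having `c` as a tree-cycle. -/
theorem stmt_5 {V : Type*} [Fintype V] {a : V}
    (c : (⊤ : SimpleGraph V).Walk a a) (hc : c.IsCycle)
    (e : Sym2 V) (he : e ∈ c.edges) (v : V) (hv : v ∈ c.support)
    (T : SimpleGraph V)
    (hTdef : T = SimpleGraph.fromEdgeSet
      (({f | f ∈ c.edges} \ {e}) ∪ {f | ∃ u, u ∉ c.support ∧ f = s(v, u)})) :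
    T ≤ (⊤ : SimpleGraph V) ∧ T.IsTree ∧
    e ∈ (⊤ : SimpleGraph V).edgeSet \ T.edgeSet ∧
    cycEdges T e = {f | f ∈ c.edges} ∧
    ∀ T' : SimpleGraph V, T' ≤ (⊤ : SimpleGraph V) → T'.IsTree →
      ∀ f ∈ (⊤ : SimpleGraph V).edgeSet \ T'.edgeSet,
        cycEdges T' f = {g | g ∈ c.edges} →
        cycleInterNum (⊤ : SimpleGraph V) T e ≤ cycleInterNum (⊤ : SimpleGraph V) T' f := by
  classical
  obtain ⟨x, y, q, hq, rfl, heq, hE, hS⟩ := cycOpen_of_mem c hc e he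
  have hTadj : ∀ z w, T.Adj z w ↔ s(z, w) ∈ q.edges ∨ ∃ u, u ∉ c.support ∧ s(z, w) = s(v, u) := by
    intro z w
    rw [hTdef, fromEdgeSet_adj]
    constructor
    · rintro ⟨⟨h1, h2⟩ | h1, -⟩
      · left; exact ((hE _).1 h1).resolve_left h2
      · right; exact h1
    · rintro (h | ⟨u, hu, h⟩)
      · exact ⟨Or.inl ⟨(hE _).2 (Or.inr h), fun h' => heq (h' ▸ h)⟩, (q.adj_of_mem_edges h).ne⟩
      · refine ⟨Or.inr ⟨u, hu, h⟩, ?_⟩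
        rintro rfl
        have := Sym2.eq_iff.1 h
        grind
  have hqT : ∀ g ∈ q.edges, g ∈ T.edgeSet := by
    intro g
    induction g with
    | _ z w => intro h; exact (hTadj z w).2 (Or.inl h)
  let p := q.transfer T hqT
  have hp : p.IsPath := hq.transfer hqT
  have hpe : p.edges = q.edges := q.edges_transfer hqT
  have hps : p.support = q.support := q.support_transfer hqT
  have hstar : ∀ u, u ∉ c.support → T.Adj v u := fun u hu => (hTadj v u).2 (Or.inr ⟨u, hu, rfl⟩)
  have hconn : T.Connected := by
    rw [connected_iff_exists_forall_reachable]
    refine ⟨v, fun w => ?_⟩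
    by_cases hw : w ∈ c.support
    · rw [hS, ← hps] at hw
      rw [hS, ← hps] at hv
      exact ⟨(p.takeUntil v hv).reverse.append (p.takeUntil w hw)⟩
    · exact (hstar w hw).reachable
  have hTree : T.IsTree := by
    rw [isTree_iff_connected_and_card]
    refine ⟨hconn, le_antisymm ?_ hconn.card_vert_le_card_edgeSet_add_one⟩
    have hsub : T.edgeSet ⊆ ((q.edges.toFinset ∪ (q.support.toFinsetᶜ).image (fun u => s(v, u)) :
        Finset (Sym2 V)) : Set (Sym2 V)) := by
      intro g
      induction g with
      | _ z w =>
      intro h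
      rcases (hTadj z w).1 h with h | ⟨u, hu, h⟩
      · simp [h]
      · rw [h]
        simp only [Finset.coe_union, Set.mem_union]
        right
        rw [hS] at hu
        simp only [Finset.coe_image]
        exact ⟨u, by simpa using hu, rfl⟩
    have h1 := Set.ncard_le_ncard hsub (Finset.finite_toSet _)
    rw [Set.ncard_coe_finset] at h1
    have h2 := h1.trans (Finset.card_union_le _ _)
    have h3 : q.edges.toFinset.card = q.length := by
      rw [List.toFinset_card_of_nodup hq.isTrail.edges_nodup, Walk.length_edges]
    have h4 : q.support.toFinset.card = q.length + 1 := by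
      rw [List.toFinset_card_of_nodup hq.support_nodup, Walk.length_support]
    have h5 := Finset.card_image_le (s := q.support.toFinsetᶜ) (f := fun u => s(v, u))
    rw [Finset.card_compl, h4] at h5
    have h6 := Finset.card_le_univ q.support.toFinset
    rw [Nat.card_eq_fintype_card (α := V)]
    change T.edgeSet.ncard + 1 ≤ _
    omega
  have heT : s(x, y) ∈ (⊤ : SimpleGraph V).edgeSet \ T.edgeSet := by
    refine ⟨c.edges_subset_edgeSet he, ?_⟩
    intro h
    rcases (hTadj x y).1 h with h | ⟨u, hu, h⟩
    · exact heq h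
    · rw [hS] at hu
      have : u ∈ s(x, y) := by rw [h]; simp
      rcases Sym2.mem_iff.1 this with rfl | rfl <;> simp at hu
  have hcyc : cycEdges T s(x, y) = {f | f ∈ c.edges} := by
    rw [cycEdges_eq hTree.isAcyclic p hp, hpe]
    ext g
    simp [hE]
  refine ⟨le_top, hTree, heT, hcyc, ?_⟩
  intro T' _ hT' f hf hfc
  have hfm : f ∈ c.edges := by
    have : f ∈ cycEdges T' f := Set.mem_insert _ _
    rwa [hfc] at this
  obtain ⟨x', y', q', hq', rfl, heq', hE', hS'⟩ := cycOpen_of_mem c hc f hfm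
  have hqT' : ∀ g ∈ q'.edges, g ∈ T'.edgeSet := by
    intro g hg
    have : g ∈ cycEdges T' s(x', y') := by rw [hfc]; exact (hE' g).2 (Or.inr hg)
    rcases this with rfl | ⟨z, w, -, r, -, hr⟩
    · exact absurd hg heq'
    · exact r.edges_subset_edgeSet hr
  let p' := q'.transfer T' hqT'
  have hp' : p'.IsPath := hq'.transfer hqT'
  have hps' : p'.support = q'.support := q'.support_transfer hqT'
  have e1 := interNum_add hTree p hp heT
  have e2 := interNum_add hT' p' hp' hf
  rw [hcyc] at e1
  rw [hfc] at e2
  have := sep_le (T := T) (T' := T') (P := {g | g ∈ p.edges}) (P' := {g | g ∈ p'.edges})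
    {w | w ∈ c.support} v hv ?_ ?_
  · omega
  · intro u hu
    apply Adj.reachable
    rw [deleteEdges_adj]
    refine ⟨hstar u hu, fun h => hu ?_⟩
    have := p.snd_mem_support_of_mem_edges h
    rw [hps] at this
    exact (hS u).2 this
  · intro z hz w hw h
    exact support_not_reach hT'.isAcyclic p' z w (by rw [hps']; exact (hS' z).1 hz)
      (by rw [hps']; exact (hS' w).1 hw) h
end

section
/- Let G = K_n be the complete graph on n vertices. Then for every spanning tree T of G and every tree-cycle c of T, the cycle intersection number satisfies ∩_T(c) ≥ 2(n - 3); that is, tree-cycles of a star spanning tree achieve the minimum cycle intersection number among all tree-cycles of all spanning trees of K_n. -/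
open SimpleGraph

lemma first_edge {V : Type*} {T : SimpleGraph V} (hT : T.IsTree) {x y : V}
    (p : T.Walk x y) (hp : p.IsPath) (hxy : x ≠ y) :
    ∃ x', T.Adj x x' ∧ s(x, x') ∈ p.edges ∧
      ¬ (T.deleteEdges {s(x, x')}).Reachable x x' ∧
      ¬ (T.deleteEdges {s(x, x')}).Reachable x y := by
  cases p with
  | nil => exact absurd rfl hxy
  | cons h q =>
    rename_i x'
    rw [Walk.cons_isPath_iff] at hp
    have hb : ¬ (T.deleteEdges {s(x, x')}).Reachable x x' := by
      have h1 := (isAcyclic_iff_forall_adj_isBridge.1 hT.isAcyclic) h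
      exact (isBridge_iff.1 h1)
    refine ⟨x', h, by simp, hb, fun hr => hb (hr.trans ?_)⟩
    refine Reachable.symm ⟨q.toDeleteEdges _ ?_⟩
    intro f hf hf'
    rw [Set.mem_singleton_iff] at hf'
    subst hf'
    exact hp.2 (q.fst_mem_support_of_mem_edges hf)

lemma crossing_mem {V : Type*} {T : SimpleGraph V} {f : Sym2 V} {x u v : V}
    (hu : (T.deleteEdges {f}).Reachable x u) (hv : ¬ (T.deleteEdges {f}).Reachable x v)
    (p : T.Walk u v) : f ∈ p.edges := by
  by_contra hf
  refine hv (hu.trans ⟨p.toDeleteEdges _ ?_⟩)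
  intro g hg hg'
  rw [Set.mem_singleton_iff] at hg'
  exact hf (hg' ▸ hg)

lemma crossing_adj {V : Type*} {T : SimpleGraph V} {f : Sym2 V} {x u v : V}
    (hu : (T.deleteEdges {f}).Reachable x u) (hv : ¬ (T.deleteEdges {f}).Reachable x v)
    (h : T.Adj u v) : s(u, v) = f := by
  have := crossing_mem hu hv (Walk.cons h Walk.nil)
  simp only [Walk.edges_cons, Walk.edges_nil, List.mem_singleton] at this
  exact this.symm

lemma crossing_intersect {V : Type*} {T : SimpleGraph V} (hT : T.IsTree) {e f : Sym2 V}
    {x u v : V} (hf : f ∈ cycEdges T e) (hfT : f ∈ T.edgeSet)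
    (hu : (T.deleteEdges {f}).Reachable x u) (hv : ¬ (T.deleteEdges {f}).Reachable x v) :
    cyclesIntersect T e s(u, v) := by
  obtain ⟨p, hp⟩ := hT.connected.exists_isPath u v
  exact ⟨f, ⟨hf, Or.inr ⟨u, v, rfl, p, hp, crossing_mem hu hv p⟩⟩, hfT⟩

lemma count_aux {V : Type*} [Fintype V] (A C : Finset V) (hd : Disjoint A C)
    (x y z : V) (hx : x ∈ A) (hy : y ∈ C) (hzA : z ∉ A) (hzC : z ∉ C)
    (S : Set (Sym2 V)) (e f g : Sym2 V)
    (hA : ∀ u v, u ∈ A → v ∉ A → s(u, v) ∈ S ∪ {e, f, g})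
    (hC : ∀ u v, u ∈ C → v ∉ C → s(u, v) ∈ S ∪ {e, f, g}) :
    2 * Fintype.card V ≤ S.ncard + 6 := by
  classical
  set B := (A ∪ C)ᶜ with hB
  have hcard : B.card + (A.card + C.card) = Fintype.card V := by
    rw [← Finset.card_union_of_disjoint hd, hB, Finset.card_compl_add_card]
  have hAC : ∀ w, w ∈ A → w ∉ C := fun w h => Finset.disjoint_left.1 hd h
  have hBm : ∀ w, w ∈ B ↔ w ∉ A ∧ w ∉ C := by intro w; simp [hB]
  let P : Finset (V × V) := A ×ˢ B ∪ A ×ˢ C ∪ C ×ˢ B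
  have hP : P.card = A.card * B.card + A.card * C.card + C.card * B.card := by
    rw [Finset.card_union_of_disjoint, Finset.card_union_of_disjoint]
    · simp [Finset.card_product]
    · rw [Finset.disjoint_left]; rintro ⟨u, v⟩; simp only [Finset.mem_product]; grind
    · rw [Finset.disjoint_left]; rintro ⟨u, v⟩
      simp only [Finset.mem_product, Finset.mem_union]; grind
  have hinj : Set.InjOn (fun q : V × V => s(q.1, q.2)) (P : Set (V × V)) := by
    rintro ⟨u, v⟩ h ⟨u', v'⟩ h' heq
    simp only [P, Finset.coe_union, Finset.coe_product, Set.mem_union, Set.mem_prod,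
      Finset.mem_coe] at h h'
    simp only [Sym2.eq_iff] at heq
    rcases heq with ⟨rfl, rfl⟩ | ⟨rfl, rfl⟩
    · rfl
    · exfalso; grind
  have hsub : (fun q : V × V => s(q.1, q.2)) '' (P : Set (V × V)) ⊆ S ∪ {e, f, g} := by
    rintro _ ⟨⟨u, v⟩, h, rfl⟩
    simp only [P, Finset.coe_union, Finset.coe_product, Set.mem_union, Set.mem_prod,
      Finset.mem_coe] at h
    rcases h with (h | h) | h
    · exact hA u v h.1 ((hBm v).1 h.2).1
    · exact hA u v h.1 (fun h2 => hAC v h2 h.2)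
    · exact hC u v h.1 ((hBm v).1 h.2).2
  have h1 : P.card ≤ (S ∪ {e, f, g}).ncard := by
    rw [← Set.ncard_coe_finset P, ← hinj.ncard_image]
    exact Set.ncard_le_ncard hsub (Set.toFinite _)
  have h2 : (S ∪ {e, f, g}).ncard ≤ S.ncard + ({e, f, g} : Set (Sym2 V)).ncard :=
    Set.ncard_union_le _ _
  have h3 : ({e, f, g} : Set (Sym2 V)).ncard ≤ 3 := by
    have a1 := Set.ncard_insert_le e ({f, g} : Set (Sym2 V))
    have a2 := Set.ncard_insert_le f ({g} : Set (Sym2 V))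
    have a3 := Set.ncard_singleton g
    omega
  have ha : 0 < A.card := Finset.card_pos.2 ⟨x, hx⟩
  have hc : 0 < C.card := Finset.card_pos.2 ⟨y, hy⟩
  have hb : 0 < B.card := Finset.card_pos.2 ⟨z, (hBm z).2 ⟨hzA, hzC⟩⟩
  obtain ⟨a, ha⟩ := Nat.exists_eq_add_of_lt ha
  obtain ⟨b, hb⟩ := Nat.exists_eq_add_of_lt hb
  obtain ⟨c, hc⟩ := Nat.exists_eq_add_of_lt hc
  rw [ha, hb, hc] at hP hcard
  nlinarith [Nat.zero_le (a * b), Nat.zero_le (a * c), Nat.zero_le (c * b)]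

/-- In the complete graph `K_n`, every tree-cycle `c` of every spanning
tree `T` satisfies `∩_T(c) ≥ 2(n-3)`; that is, the tree-cycles of a star spanning tree
achieve the minimum cycle intersection number. -/
theorem stmt_7 {V : Type*} [Fintype V] (n : ℕ) (hn : Fintype.card V = n)
    (T : SimpleGraph V) (hle : T ≤ (⊤ : SimpleGraph V)) (hT : T.IsTree)
    (e : Sym2 V) (he : e ∈ (⊤ : SimpleGraph V).edgeSet \ T.edgeSet) :
    2 * ((n : ℚ) - 3) ≤ (cycleInterNum (⊤ : SimpleGraph V) T e : ℚ) := by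
  classical
  induction e using Sym2.ind with
  | _ x y =>
  obtain ⟨he1, he2⟩ := he
  have hxy : x ≠ y := by simpa using he1
  have hnadj : ¬ T.Adj x y := by simpa using he2
  obtain ⟨p, hp⟩ := hT.connected.exists_isPath x y
  obtain ⟨x', hx', hxp, hbx, hnx⟩ := first_edge hT p hp hxy
  obtain ⟨y', hy', hyp, hby, hny⟩ := first_edge hT p.reverse hp.reverse hxy.symm
  rw [Walk.edges_reverse, List.mem_reverse] at hyp
  set f := s(x, x') with hf
  set g := s(y, y') with hg
  have hfg : f ≠ g := by
    intro h
    rw [hf, hg, Sym2.eq_iff] at h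
    rcases h with ⟨h, _⟩ | ⟨_, h⟩
    · exact hxy h
    · exact hnadj (h ▸ hx')
  have hfc : f ∈ cycEdges T s(x, y) := Or.inr ⟨x, y, rfl, p, hp, hxp⟩
  have hgc : g ∈ cycEdges T s(x, y) := Or.inr ⟨x, y, rfl, p, hp, hyp⟩
  have hdisj : ∀ v, (T.deleteEdges {f}).Reachable x v →
      ¬ (T.deleteEdges {g}).Reachable y v := by
    rintro v ⟨w⟩ hv
    -- the walk `w` avoids `f`; it must use `g`
    have hle' : T.deleteEdges {f} ≤ T := deleteEdges_le _
    have hmem : g ∈ (w.reverse.mapLe hle').edges := crossing_mem hv hny _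
    have hmem2 : g ∈ w.edges := by simpa using hmem
    have hys : y ∈ w.support := w.fst_mem_support_of_mem_edges hmem2
    exact hnx ⟨w.takeUntil y hys⟩
  have hzC : ¬ (T.deleteEdges {g}).Reachable y x' := by
    intro h
    have := crossing_adj h hny hx'.symm
    rw [Sym2.eq_swap] at this
    exact hfg this
  have key := count_aux
    (Finset.univ.filter fun v => (T.deleteEdges {f}).Reachable x v)
    (Finset.univ.filter fun v => (T.deleteEdges {g}).Reachable y v)
    (by
      rw [Finset.disjoint_left]
      intro v h1 h2
      exact hdisj v (by simpa using h1) (by simpa using h2))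
    x y x' (by simp) (by simp) (by simpa using hbx) (by simpa using hzC)
    {h | h ∈ (⊤ : SimpleGraph V).edgeSet \ T.edgeSet ∧ h ≠ s(x, y) ∧
      cyclesIntersect T s(x, y) h} s(x, y) f g
    (by
      intro u v hu hv
      simp only [Finset.mem_filter, Finset.mem_univ, true_and] at hu hv
      by_cases h1 : s(u, v) = s(x, y)
      · right; left; exact h1
      by_cases h2 : T.Adj u v
      · right; right; left; exact crossing_adj hu hv h2
      left
      refine ⟨⟨?_, h2⟩, h1, crossing_intersect hT hfc hx' hu hv⟩
      rw [mem_edgeSet, top_adj]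
      rintro rfl
      exact hv hu)
    (by
      intro u v hu hv
      simp only [Finset.mem_filter, Finset.mem_univ, true_and] at hu hv
      by_cases h1 : s(u, v) = s(x, y)
      · right; left; exact h1
      by_cases h2 : T.Adj u v
      · right; right; right; exact crossing_adj hu hv h2
      left
      refine ⟨⟨?_, h2⟩, h1, crossing_intersect hT hgc hy' hu hv⟩
      rw [mem_edgeSet, top_adj]
      rintro rfl
      exact hv hu)
  rw [hn] at key
  unfold cycleInterNum
  have key' := (Nat.cast_le (α := ℚ)).2 key
  push_cast at key'
  linarith
end

section
/- Let G = K_n be the complete graph on n > 4 vertices and let T_s be a star spanning tree of G. Then ∩(T_s) < ∩(T) for every spanning tree T of G that is not a star spanning tree; that is, star spanning trees are the unique minimizers of the tree intersection number. -/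
open SimpleGraph

namespace TI
open Classical

variable {V : Type*}

def Cr (T : SimpleGraph V) (g : Sym2 V) (x y : V) : Prop :=
  ¬ (T.deleteEdges {g}).Reachable x y

theorem cr_path {T : SimpleGraph V} (hT : T.IsTree) {g : Sym2 V} {x y : V} (h : Cr T g x y) :
    g ∈ pathEdges T x y := by
  obtain ⟨p, hp⟩ := (hT.1.preconnected x y).exists_isPath
  refine ⟨p, hp, ?_⟩
  by_contra hg
  exact h ⟨p.toDeleteEdge g hg⟩

theorem cr_cyc {T : SimpleGraph V} (hT : T.IsTree) {g : Sym2 V} {x y : V} (h : Cr T g x y) :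
    g ∈ cycEdges T s(x, y) := Or.inr ⟨x, y, rfl, cr_path hT h⟩

theorem reach_adj {T : SimpleGraph V} {g : Sym2 V} {x y : V} (h : T.Adj x y) (hg : s(x, y) ≠ g) :
    (T.deleteEdges {g}).Reachable x y := by
  apply Adj.reachable
  rw [deleteEdges_adj]
  exact ⟨h, by simpa using hg⟩

theorem cr_edge {T : SimpleGraph V} (hT : T.IsTree) {a b : V} (h : T.Adj a b) :
    Cr T s(a, b) a b := by
  have := (isAcyclic_iff_forall_isBridge.1 hT.2) (e := s(a, b)) h
  exact isBridge_iff.1 this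

theorem reach_or {T : SimpleGraph V} (hT : T.IsTree) {a b : V} (z : V) :
    (T.deleteEdges {s(a, b)}).Reachable z a ∨ (T.deleteEdges {s(a, b)}).Reachable z b := by
  obtain ⟨p⟩ := hT.1.preconnected z a
  have key : ∀ {z c : V} (p : T.Walk z c), c = a →
      (T.deleteEdges {s(a, b)}).Reachable z a ∨ (T.deleteEdges {s(a, b)}).Reachable z b := by
    intro z c p hc
    induction p with
    | nil => exact Or.inl (hc ▸ Reachable.refl _)
    | cons h p ih =>
      rename_i u v w
      by_cases hg : s(u, v) = s(a, b)
      · rw [Sym2.eq_iff] at hg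
        rcases hg with ⟨h1, h2⟩ | ⟨h1, h2⟩
        · exact Or.inl (h1 ▸ Reachable.refl _)
        · exact Or.inr (h1 ▸ Reachable.refl _)
      · have := reach_adj h hg
        exact (ih hc).imp this.trans this.trans
  exact key p rfl

/-- cycle edges through intersecting e -/
noncomputable def N [Fintype V] (T : SimpleGraph V) (e : Sym2 V) : Finset (Sym2 V) :=
  Finset.univ.filter fun f => f ∈ (⊤ : SimpleGraph V).edgeSet \ T.edgeSet ∧ cyclesIntersect T e f

theorem mem_N [Fintype V] {T : SimpleGraph V} (hT : T.IsTree) {e : Sym2 V} {g : Sym2 V}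
    (hg : g ∈ T.edgeSet) (hge : g ∈ cycEdges T e) {z w : V} (h : Cr T g z w) (hne : s(z, w) ≠ g) :
    s(z, w) ∈ N T e := by
  simp only [N, Finset.mem_filter, Finset.mem_univ, true_and]
  refine ⟨⟨?_, ?_⟩, g, ⟨hge, cr_cyc hT h⟩, hg⟩
  · rw [mem_edgeSet, top_adj]
    rintro rfl
    exact h (Reachable.refl _)
  · intro ha
    exact h (reach_adj ha hne)

theorem two_le {T : SimpleGraph V} [Fintype V] (hT : T.IsTree) {e : Sym2 V} {a b c z : V}
    (hab : T.Adj a b) (hbc : T.Adj b c) (hac : a ≠ c)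
    (h1 : s(a, b) ∈ cycEdges T e) (h2 : s(b, c) ∈ cycEdges T e)
    (hza : z ≠ a) (hzb : z ≠ b) (hzc : z ≠ c) :
    2 ≤ ((({a, b, c} : Finset V)).filter fun i => s(z, i) ∈ N T e).card := by
  have hab' := hab.ne
  have hbc' := hbc.ne
  have key : ∀ i j, i ≠ j → i ∈ ({a, b, c} : Finset V) → j ∈ ({a, b, c} : Finset V) →
      s(z, i) ∈ N T e → s(z, j) ∈ N T e →
      2 ≤ ((({a, b, c} : Finset V)).filter fun i => s(z, i) ∈ N T e).card := by
    intro i j hij hi hj h h'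
    rw [← Finset.card_pair hij]
    apply Finset.card_le_card
    intro k hk
    simp only [Finset.mem_insert, Finset.mem_singleton] at hk
    rcases hk with rfl | rfl <;> simp [-Finset.mem_insert, *]
  have c1 := cr_edge hT hab
  have c2 := cr_edge hT hbc
  have r1 : (T.deleteEdges {s(a, b)}).Reachable b c := reach_adj hbc (by grind)
  have r2 : (T.deleteEdges {s(b, c)}).Reachable a b := reach_adj hab (by grind)
  have ha : ∀ i, i ≠ z → (Cr T s(a, b) z i → s(z, i) ∈ N T e) := fun i hi h =>
    mem_N hT hab h1 h (by grind)
  have hc : ∀ i, i ≠ z → (Cr T s(b, c) z i → s(z, i) ∈ N T e) := fun i hi h =>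
    mem_N hT hbc h2 h (by grind)
  rcases reach_or hT (a := a) (b := b) z with h | h
  · apply key b c hbc' (by simp) (by simp)
    · exact ha _ hzb.symm fun h' => c1 (h.symm.trans h')
    · exact ha _ hzc.symm fun h' => c1 (h.symm.trans (h'.trans r1.symm))
  · rcases reach_or hT (a := b) (b := c) z with h3 | h3
    · apply key a c hac (by simp) (by simp)
      · exact ha _ hza.symm fun h' => c1 (h'.symm.trans h)
      · exact hc _ hzc.symm fun h' => c2 (h3.symm.trans h')
    · apply key a b hab' (by simp) (by simp)
      · exact hc _ hza.symm fun h' => c2 ((h'.trans r2).symm.trans h3)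
      · exact hc _ hzb.symm fun h' => c2 (h'.symm.trans h3)

noncomputable def F [Fintype V] (T : SimpleGraph V) (e : Sym2 V) (P : Finset V) : Finset (Sym2 V) :=
  ((Pᶜ).sigma fun z => P.filter fun i => s(z, i) ∈ N T e).image fun q => s(q.1, q.2)

theorem card_F [Fintype V] (T : SimpleGraph V) (e : Sym2 V) (P : Finset V) :
    (F T e P).card = ∑ z ∈ Pᶜ, (P.filter fun i => s(z, i) ∈ N T e).card := by
  rw [F, Finset.card_image_of_injOn, Finset.card_sigma]
  rintro ⟨z, i⟩ h ⟨z', i'⟩ h' heq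
  simp only [Finset.coe_sigma, Set.mem_sigma_iff, Finset.mem_coe, Finset.mem_compl,
    Finset.mem_filter] at h h'
  simp only [Sym2.eq_iff] at heq
  rcases heq with ⟨rfl, rfl⟩ | ⟨rfl, rfl⟩
  · rfl
  · exact absurd h.2.1 h'.1

theorem F_sub [Fintype V] (T : SimpleGraph V) (e : Sym2 V) (P : Finset V) : F T e P ⊆ N T e := by
  intro f hf
  simp only [F, Finset.mem_image, Finset.mem_sigma, Finset.mem_filter] at hf
  obtain ⟨q, hq, rfl⟩ := hf
  exact hq.2.2

theorem F_not [Fintype V] (T : SimpleGraph V) (e : Sym2 V) (P : Finset V) {a b : V}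
    (h : a ∈ P ↔ b ∈ P) : s(a, b) ∉ F T e P := by
  intro hf
  simp only [F, Finset.mem_image, Finset.mem_sigma, Finset.mem_filter, Finset.mem_compl,
    Sym2.eq_iff] at hf
  obtain ⟨q, hq, ⟨rfl, rfl⟩ | ⟨rfl, rfl⟩⟩ := hf <;> tauto

theorem lower [Fintype V] {T : SimpleGraph V} (hT : T.IsTree) {e : Sym2 V} {a b c : V}
    (hab : T.Adj a b) (hbc : T.Adj b c) (hac : a ≠ c)
    (h1 : s(a, b) ∈ cycEdges T e) (h2 : s(b, c) ∈ cycEdges T e) :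
    2 * (Fintype.card V - 3) + 1 ≤ (N T e).card := by
  have hab' := hab.ne
  have hbc' := hbc.ne
  have hP : ({a, b, c} : Finset V).card = 3 := Finset.card_eq_three.2 ⟨a, b, c, hab', hac, hbc', rfl⟩
  have hF : 2 * (Fintype.card V - 3) ≤ (F T e {a, b, c}).card := by
    rw [card_F, ← hP, ← Finset.card_compl, mul_comm, ← smul_eq_mul]
    apply Finset.card_nsmul_le_sum
    intro z hz
    simp only [Finset.mem_compl, Finset.mem_insert, Finset.mem_singleton, not_or] at hz
    exact two_le hT hab hbc hac h1 h2 hz.1 hz.2.1 hz.2.2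
  have hm : s(a, c) ∈ N T e := mem_N hT hab h1
    (fun h => cr_edge hT hab (h.trans (reach_adj hbc (by grind)).symm)) (by grind)
  have hn := F_not T e {a, b, c} (a := a) (b := c) (by simp)
  have := Finset.card_le_card (Finset.insert_subset hm (F_sub T e {a, b, c}))
  rw [Finset.card_insert_of_notMem hn] at this
  omega

theorem lower' [Fintype V] (hV : 4 < Fintype.card V) {T : SimpleGraph V} (hT : T.IsTree)
    {e : Sym2 V} {a b c d : V}
    (hab : T.Adj a b) (hbc : T.Adj b c) (hcd : T.Adj c d) (hac : a ≠ c) (hbd : b ≠ d) (had : a ≠ d)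
    (h1 : s(a, b) ∈ cycEdges T e) (h2 : s(b, c) ∈ cycEdges T e) (h3 : s(c, d) ∈ cycEdges T e) :
    2 * (Fintype.card V - 3) + 1 < (N T e).card := by
  have hab' := hab.ne
  have hbc' := hbc.ne
  have hcd' := hcd.ne
  have hP : ({a, b, c} : Finset V).card = 3 := Finset.card_eq_three.2 ⟨a, b, c, hab', hac, hbc', rfl⟩
  have h2' : ∀ z ∈ ({a, b, c} : Finset V)ᶜ,
      2 ≤ ((({a, b, c} : Finset V)).filter fun i => s(z, i) ∈ N T e).card := by
    intro z hz
    simp only [Finset.mem_compl, Finset.mem_insert, Finset.mem_singleton, not_or] at hz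
    exact two_le hT hab hbc hac h1 h2 hz.1 hz.2.1 hz.2.2
  have hF : 2 * (Fintype.card V - 3) ≤ (F T e {a, b, c}).card := by
    rw [card_F, ← hP, ← Finset.card_compl, mul_comm, ← smul_eq_mul]
    exact Finset.card_nsmul_le_sum _ _ _ h2'
  have hm : s(a, c) ∈ N T e := mem_N hT hab h1
    (fun h => cr_edge hT hab (h.trans (reach_adj hbc (by grind)).symm)) (by grind)
  have hn := F_not T e {a, b, c} (a := a) (b := c) (by simp)
  have hle := Finset.card_le_card (Finset.insert_subset hm (F_sub T e {a, b, c}))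
  rw [Finset.card_insert_of_notMem hn] at hle
  obtain ⟨z, hz⟩ : ∃ z, z ∉ ({a, b, c, d} : Finset V) := by
    by_contra! hcon
    have h := Finset.card_le_card (fun z _ => hcon z : (Finset.univ : Finset V) ⊆ _)
    rw [Finset.card_univ] at h
    have := Finset.card_le_four (a := a) (b := b) (c := c) (d := d)
    omega
  simp only [Finset.mem_insert, Finset.mem_singleton, not_or] at hz
  obtain ⟨hza, hzb, hzc, hzd⟩ := hz
  have c1 := cr_edge hT hab
  have c2 := cr_edge hT hbc
  have c3 := cr_edge hT hcd
  rcases reach_or hT (a := c) (b := d) z with h | h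
  · have hzN : s(z, d) ∈ N T e := mem_N hT hcd h3 (fun h' => c3 (h.symm.trans h')) (by grind)
    have hzF := F_not T e {a, b, c} (a := z) (b := d) (by grind)
    have hle := Finset.card_le_card
      (Finset.insert_subset hzN (Finset.insert_subset hm (F_sub T e {a, b, c})))
    rw [Finset.card_insert_of_notMem, Finset.card_insert_of_notMem hn] at hle
    · omega
    · rw [Finset.mem_insert, not_or]
      exact ⟨by grind, hzF⟩
  · have r1 : (T.deleteEdges {s(c, d)}).Reachable a b := reach_adj hab (by grind)
    have r2 : (T.deleteEdges {s(c, d)}).Reachable b c := reach_adj hbc (by grind)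
    have k : ∀ i, i ≠ d → (T.deleteEdges {s(c, d)}).Reachable i c → s(z, i) ∈ N T e :=
      fun i hi hr => mem_N hT hcd h3 (fun h' => c3 ((h'.trans hr).symm.trans h)) (by grind)
    have hF' : 2 * (Fintype.card V - 3) < (F T e {a, b, c}).card := by
      rw [card_F, ← hP, ← Finset.card_compl, mul_comm, ← smul_eq_mul, ← Finset.sum_const]
      apply Finset.sum_lt_sum h2'
      refine ⟨z, by simp [*], ?_⟩
      rw [Finset.filter_true_of_mem, hP]
      · norm_num
      · intro i hi
        simp only [Finset.mem_insert, Finset.mem_singleton] at hi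
        rcases hi with rfl | rfl | rfl
        · exact k _ had (r1.trans r2)
        · exact k _ hbd r2
        · exact k _ hcd' (Reachable.refl _)
    omega

theorem lower_all [Fintype V] {T : SimpleGraph V} (hT : T.IsTree) {e : Sym2 V}
    (he : e ∈ (⊤ : SimpleGraph V).edgeSet \ T.edgeSet) :
    2 * (Fintype.card V - 3) + 1 ≤ (N T e).card := by
  induction e with | _ x y
  obtain ⟨h1, h2⟩ := he
  rw [mem_edgeSet, top_adj] at h1
  rw [mem_edgeSet] at h2
  obtain ⟨p, hp⟩ := (hT.1.preconnected x y).exists_isPath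
  cases p with
  | nil => exact absurd rfl h1
  | cons hab p =>
    cases p with
    | nil => exact absurd hab h2
    | cons hbc p =>
      refine lower hT hab hbc ?_ (Or.inr ⟨_, _, rfl, _, hp, by simp⟩)
        (Or.inr ⟨_, _, rfl, _, hp, by simp⟩)
      rintro rfl
      simp at hp

theorem step {T : SimpleGraph V} (hT : T.IsTree) {a : V} (h : ¬ ∀ u, u ≠ a → T.Adj a u) :
    ∃ c d, T.Adj a c ∧ T.Adj c d ∧ a ≠ d := by
  push Not at h
  obtain ⟨u, hu, hn⟩ := h
  obtain ⟨p, hp⟩ := (hT.1.preconnected a u).exists_isPath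
  cases p with
  | nil => exact absurd rfl hu
  | cons hab p =>
    cases p with
    | nil => exact absurd hab hn
    | cons hbc p =>
      refine ⟨_, _, hab, hbc, ?_⟩
      rintro rfl
      simp at hp

theorem exists_p4 [Nonempty V] {T : SimpleGraph V} (hT : T.IsTree)
    (hns : ¬ ∃ w : V, ∀ u, u ≠ w → T.Adj w u) :
    ∃ a b c d, T.Adj a b ∧ T.Adj b c ∧ T.Adj c d ∧ a ≠ c ∧ b ≠ d := by
  push Not at hns
  obtain ⟨a⟩ := ‹Nonempty V›
  obtain ⟨c, d, hac, hcd, had⟩ := step hT (a := a) (by push Not; exact hns a)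
  by_cases hb : ∃ b, T.Adj a b ∧ b ≠ c
  · obtain ⟨b, hab, hbc⟩ := hb
    exact ⟨b, a, c, d, hab.symm, hac, hcd, hbc, had⟩
  · push Not at hb
    obtain ⟨d', e', h1, h2, h3⟩ := step hT (a := c) (by push Not; exact hns c)
    refine ⟨a, c, d', e', hac, h1, h2, ?_, h3⟩
    rintro rfl
    exact h3 (hb _ h2).symm

theorem lower_one [Fintype V] (hV : 4 < Fintype.card V) {T : SimpleGraph V} (hT : T.IsTree)
    (hns : ¬ ∃ w : V, ∀ u, u ≠ w → T.Adj w u) :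
    ∃ e ∈ (⊤ : SimpleGraph V).edgeSet \ T.edgeSet,
      2 * (Fintype.card V - 3) + 1 < (N T e).card := by
  have : Nonempty V := hT.1.nonempty
  obtain ⟨a, b, c, d, hab, hbc, hcd, hac, hbd⟩ := exists_p4 hT hns
  have hab' := hab.ne
  have hbc' := hbc.ne
  have hcd' := hcd.ne
  have c1 := cr_edge hT hab
  have c2 := cr_edge hT hbc
  have c3 := cr_edge hT hcd
  have x2 : Cr T s(b, c) a d := fun h => c2 ((reach_adj hab (by grind)).symm.trans
    (h.trans (reach_adj hcd (by grind)).symm))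
  have had : a ≠ d := by
    rintro rfl
    exact x2 (Reachable.refl _)
  have x1 : Cr T s(a, b) a d := fun h => c1 (h.trans ((reach_adj hcd (by grind)).symm.trans
    (reach_adj hbc (by grind)).symm))
  have x3 : Cr T s(c, d) a d := fun h => c3 (((reach_adj hbc (by grind)).symm.trans
    (reach_adj hab (by grind)).symm).trans h)
  refine ⟨s(a, d), ⟨by simpa using had, fun h => x2 (reach_adj h (by grind))⟩, ?_⟩
  exact lower' hV hT hab hbc hcd hac hbd had (cr_cyc hT x1) (cr_cyc hT x2) (cr_cyc hT x3)

theorem star_nonadj {T : SimpleGraph V} {v x y : V}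
    (hs : ∀ u, u ≠ v → T.Adj v u) (h : s(x, y) ∈ (⊤ : SimpleGraph V).edgeSet \ T.edgeSet) :
    x ≠ y ∧ x ≠ v ∧ y ≠ v := by
  obtain ⟨h1, h2⟩ := h
  rw [mem_edgeSet, top_adj] at h1
  rw [mem_edgeSet] at h2
  refine ⟨h1, ?_, ?_⟩
  · rintro rfl
    exact h2 (hs _ h1.symm)
  · rintro rfl
    exact h2 (hs _ h1).symm

theorem star_cyc {T : SimpleGraph V} (hT : T.IsTree) {v : V}
    (hs : ∀ u, u ≠ v → T.Adj v u) {e g : Sym2 V} (h : e ∈ (⊤ : SimpleGraph V).edgeSet \ T.edgeSet)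
    (hg : g ∈ cycEdges T e) (hgT : g ∈ T.edgeSet) : ∃ x ∈ e, x ≠ v ∧ g = s(v, x) := by
  rcases hg with rfl | ⟨x, y, rfl, p, hp, hgp⟩
  · exact absurd hgT h.2
  · obtain ⟨hxy, hx, hy⟩ := star_nonadj hs h
    let q : T.Walk x y := Walk.cons (hs x hx).symm (Walk.cons (hs y hy) Walk.nil)
    have hq : q.IsPath := by
      simp [q, hxy, hx, hy.symm]
    have : p = q := congrArg Subtype.val (hT.2.path_unique ⟨p, hp⟩ ⟨q, hq⟩)
    subst this
    simp only [q, Walk.edges_cons, Walk.edges_nil, List.mem_cons, List.not_mem_nil, or_false] at hgp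
    rcases hgp with rfl | rfl
    · exact ⟨x, by simp, hx, Sym2.eq_swap⟩
    · exact ⟨y, by simp, hy, rfl⟩

theorem upper [Fintype V] {T : SimpleGraph V} (hT : T.IsTree) {v : V} (hV : 4 < Fintype.card V)
    (hs : ∀ u, u ≠ v → T.Adj v u) {e : Sym2 V} (h : e ∈ (⊤ : SimpleGraph V).edgeSet \ T.edgeSet) :
    (N T e).card ≤ 2 * (Fintype.card V - 3) + 1 := by
  induction e with | _ x y
  obtain ⟨hxy, hx, hy⟩ := star_nonadj hs h
  have hsub : N T s(x, y) ⊆ (({v, x} : Finset V)ᶜ.image fun w => s(x, w)) ∪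
      (({v, x, y} : Finset V)ᶜ.image fun w => s(y, w)) := by
    intro f hf
    simp only [N, Finset.mem_filter, Finset.mem_univ, true_and] at hf
    obtain ⟨hf, g, ⟨hge, hgf⟩, hgT⟩ := hf
    obtain ⟨z, hz, hzv, rfl⟩ := star_cyc hT hs h hge hgT
    obtain ⟨z', hz', hzv', hzz⟩ := star_cyc hT hs hf hgf hgT
    obtain rfl : z = z' := by grind
    obtain ⟨w, rfl⟩ := hz'
    obtain ⟨h1, h2, h3⟩ := star_nonadj hs hf
    rw [Sym2.mem_iff] at hz
    simp only [Finset.mem_union, Finset.mem_image, Finset.mem_compl, Finset.mem_insert,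
      Finset.mem_singleton]
    rcases hz with rfl | rfl
    · exact Or.inl ⟨w, by grind, rfl⟩
    · by_cases hw : w = x
      · subst hw
        exact Or.inl ⟨z, by grind, Sym2.eq_swap⟩
      · exact Or.inr ⟨w, by grind, rfl⟩
  have h3 : ({v, x, y} : Finset V).card = 3 :=
    Finset.card_eq_three.2 ⟨v, x, y, hx.symm, hy.symm, hxy, rfl⟩
  have h2 : ({v, x} : Finset V).card = 2 := Finset.card_pair hx.symm
  refine (Finset.card_le_card hsub).trans ((Finset.card_union_le _ _).trans ?_)
  refine (add_le_add Finset.card_image_le Finset.card_image_le).trans ?_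
  rw [Finset.card_compl, Finset.card_compl, h3, h2]
  omega

/-- nonedges -/
noncomputable def E [Fintype V] (T : SimpleGraph V) : Finset (Sym2 V) :=
  Finset.univ.filter fun f => f ∈ (⊤ : SimpleGraph V).edgeSet \ T.edgeSet

def H (T : SimpleGraph V) : SimpleGraph (Sym2 V) where
  Adj e f := e ≠ f ∧ e ∈ (⊤ : SimpleGraph V).edgeSet \ T.edgeSet ∧
    f ∈ (⊤ : SimpleGraph V).edgeSet \ T.edgeSet ∧ cyclesIntersect T e f
  symm := ⟨fun e f h => ⟨h.1.symm, h.2.2.1, h.2.1, by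
    have := h.2.2.2
    unfold cyclesIntersect at this ⊢
    rwa [Set.inter_comm (cycEdges T f)]⟩⟩
  loopless := ⟨fun e h => h.1 rfl⟩

theorem self_mem [Fintype V] {T : SimpleGraph V} (hT : T.IsTree) {e : Sym2 V}
    (h : e ∈ (⊤ : SimpleGraph V).edgeSet \ T.edgeSet) : e ∈ N T e := by
  simp only [N, Finset.mem_filter, Finset.mem_univ, true_and]
  refine ⟨h, ?_⟩
  induction e with | _ x y
  obtain ⟨h1, h2⟩ := h
  rw [mem_edgeSet, top_adj] at h1
  obtain ⟨p, hp⟩ := (hT.1.preconnected x y).exists_isPath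
  cases p with
  | nil => exact absurd rfl h1
  | @cons _ u _ hab p =>
    have : s(x, u) ∈ cycEdges T s(x, y) := Or.inr ⟨_, _, rfl, _, hp, by simp⟩
    exact ⟨_, ⟨this, this⟩, hab⟩

theorem two_mul_inter [Fintype V] {T : SimpleGraph V} (hT : T.IsTree) :
    2 * treeInterNum (⊤ : SimpleGraph V) T + (E T).card = ∑ e ∈ E T, (N T e).card := by
  have h1 : treeInterNum (⊤ : SimpleGraph V) T = (H T).edgeFinset.card := by
    rw [← Set.ncard_coe_finset, coe_edgeFinset, treeInterNum]
    congr 1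
    ext p
    induction p with | _ e f
    rw [mem_edgeSet]
    constructor
    · rintro ⟨e', f', h, h'⟩
      rw [← mem_edgeSet, h, mem_edgeSet]
      exact h'
    · intro h
      exact ⟨e, f, rfl, h⟩
  rw [h1, ← sum_degrees_eq_twice_card_edges]
  have h2 : ∑ e, (H T).degree e = ∑ e ∈ E T, (H T).degree e := by
    symm
    apply Finset.sum_subset (Finset.subset_univ _)
    intro e _ he
    rw [← card_neighborFinset_eq_degree, Finset.card_eq_zero, Finset.eq_empty_iff_forall_notMem]
    intro f hf
    rw [mem_neighborFinset] at hf
    exact he (by simpa only [E, Finset.mem_filter, Finset.mem_univ, true_and] using hf.2.1)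
  rw [h2, Finset.card_eq_sum_ones, ← Finset.sum_add_distrib]
  apply Finset.sum_congr rfl
  intro e he
  simp only [E, Finset.mem_filter, Finset.mem_univ, true_and] at he
  rw [← Finset.card_erase_add_one (self_mem hT he), ← card_neighborFinset_eq_degree]
  congr 2
  ext f
  rw [mem_neighborFinset]
  simp only [N, Finset.mem_erase, Finset.mem_filter, Finset.mem_univ, true_and]
  constructor
  · rintro ⟨a, b, c, d⟩
    exact ⟨a.symm, c, d⟩
  · rintro ⟨a, c, d⟩
    exact ⟨a.symm, he, c, d⟩

theorem card_E [Fintype V] {T : SimpleGraph V} (hT : T.IsTree) :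
    (E T).card + Fintype.card V = (⊤ : SimpleGraph V).edgeFinset.card + 1 := by
  have h : E T = (⊤ : SimpleGraph V).edgeFinset \ T.edgeFinset := by
    ext f
    simp only [E, Finset.mem_filter, Finset.mem_univ, true_and, Finset.mem_sdiff, mem_edgeFinset,
      Set.mem_sdiff]
  have hs : T.edgeFinset ⊆ (⊤ : SimpleGraph V).edgeFinset := edgeFinset_mono le_top
  have := Finset.card_sdiff_add_card_eq_card hs
  have h3 := hT.card_edgeFinset
  rw [h]
  omega

end TI

/-- In the complete graph `K_n` with `n > 4`, a star spanning tree `T_s`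
satisfies `∩(T_s) < ∩(T)` for every non-star spanning tree `T`; star spanning trees are
the unique minimizers of the tree intersection number. -/
theorem stmt_9 {V : Type*} [Fintype V] (hn : 4 < Fintype.card V)
    (Ts T : SimpleGraph V) (v : V)
    (hTs : IsStarSpanningTree (⊤ : SimpleGraph V) Ts v)
    (hle : T ≤ (⊤ : SimpleGraph V)) (hT : T.IsTree)
    (hns : ¬ ∃ w : V, ∀ u, u ≠ w → T.Adj w u) :
    treeInterNum (⊤ : SimpleGraph V) Ts < treeInterNum (⊤ : SimpleGraph V) T := by
  have h1 := TI.two_mul_inter hT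
  have h2 := TI.two_mul_inter hTs.2.1
  have h3 := TI.card_E hT
  have h4 := TI.card_E hTs.2.1
  have hup : ∑ e ∈ TI.E Ts, (TI.N Ts e).card ≤
      (TI.E Ts).card * (2 * (Fintype.card V - 3) + 1) := by
    rw [← smul_eq_mul]
    apply Finset.sum_le_card_nsmul
    intro e he
    simp only [TI.E, Finset.mem_filter, Finset.mem_univ, true_and] at he
    exact TI.upper hTs.2.1 hn hTs.2.2 he
  have hlo : (TI.E T).card * (2 * (Fintype.card V - 3) + 1) < ∑ e ∈ TI.E T, (TI.N T e).card := by
    rw [← smul_eq_mul, ← Finset.sum_const]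
    apply Finset.sum_lt_sum
    · intro e he
      simp only [TI.E, Finset.mem_filter, Finset.mem_univ, true_and] at he
      exact TI.lower_all hT he
    · obtain ⟨e, he, h⟩ := TI.lower_one hn hT hns
      exact ⟨e, by simpa only [TI.E, Finset.mem_filter, Finset.mem_univ, true_and] using he, h⟩
  have hE : (TI.E T).card = (TI.E Ts).card := by omega
  rw [hE] at hlo h1
  omega
end

section
/- Let G be a finite connected simple graph that admits a star spanning tree T_s with center v. Then the tree intersection number of T_s satisfies ∩(T_s) = (1/2) Σ_{u ∈ V \ {v}} (d(u) - 1)(d(u) - 2), where d(u) is the degree of u in G. -/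
open SimpleGraph

theorem star_path {V : Type*} (T : SimpleGraph V) (v : V) (hT : T.IsTree)
    (hs : ∀ u, u ≠ v → T.Adj v u) {x y : V} (hx : x ≠ v) (hy : y ≠ v) (hxy : x ≠ y) :
    pathEdges T x y = {s(x, v), s(v, y)} := by
  have h1 : T.Adj x v := (hs x hx).symm
  have h2 : T.Adj v y := hs y hy
  let q : T.Walk x y := Walk.cons h1 (Walk.cons h2 Walk.nil)
  have hq : q.IsPath := by
    simp [q, Walk.cons_isPath_iff, hx, hxy, hy.symm]
  have hqe : q.edges = [s(x, v), s(v, y)] := rfl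
  ext f
  constructor
  · rintro ⟨p, hp, hf⟩
    have : p = q := by
      have := hT.isAcyclic.path_unique ⟨p, hp⟩ ⟨q, hq⟩
      exact congrArg Subtype.val this
    subst this
    rw [hqe] at hf
    simpa using hf
  · intro hf
    refine ⟨q, hq, ?_⟩
    rw [hqe]
    simpa using hf

theorem star_nonadj {V : Type*} (T : SimpleGraph V) (v : V) (hT : T.IsTree)
    (hs : ∀ u, u ≠ v → T.Adj v u) {x y : V} (hx : x ≠ v) (hy : y ≠ v) : ¬ T.Adj x y := by
  intro h
  have hp := star_path T v hT hs hx hy h.ne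
  have : s(x, y) ∈ pathEdges T x y :=
    ⟨Walk.cons h Walk.nil, by simp [Walk.cons_isPath_iff, h.ne], by simp⟩
  rw [hp] at this
  simp [hx, hy] at this
  try grind

theorem star_mem {V : Type*} (G T : SimpleGraph V) (v : V) (hT : T.IsTree)
    (hs : ∀ u, u ≠ v → T.Adj v u) (e : Sym2 V) :
    e ∈ G.edgeSet \ T.edgeSet ↔ e ∈ G.edgeSet ∧ v ∉ e := by
  induction e with
  | h x y =>
    simp only [Set.mem_sdiff, mem_edgeSet, Sym2.mem_iff, not_or]
    refine and_congr_right fun hG => ⟨fun h => ⟨?_, ?_⟩, fun h => ?_⟩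
    · rintro rfl
      exact h (hs y hG.ne')
    · rintro rfl
      exact h (hs x hG.ne).symm
    · exact star_nonadj T v hT hs (Ne.symm h.1) (Ne.symm h.2)

theorem star_cyc {V : Type*} (G T : SimpleGraph V) (v : V) (hT : T.IsTree)
    (hs : ∀ u, u ≠ v → T.Adj v u) (e : Sym2 V) (he : e ∈ G.edgeSet ∧ v ∉ e) (g : Sym2 V) :
    g ∈ cycEdges T e ∧ g ∈ T.edgeSet ↔ ∃ u, u ∈ e ∧ g = s(v, u) := by
  have key : ∀ x y, e = s(x, y) → pathEdges T x y = {s(x, v), s(v, y)} := by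
    rintro x y rfl
    have h := he.2
    simp only [Sym2.mem_iff, not_or] at h
    exact star_path T v hT hs (Ne.symm h.1) (Ne.symm h.2) he.1.ne
  constructor
  · rintro ⟨hg | ⟨x, y, h, hg⟩, hgT⟩
    · subst hg
      exact absurd hgT ((star_mem G T v hT hs g).2 he).2
    · rw [key x y h] at hg
      subst h
      rcases hg with hg | hg
      · exact ⟨x, by simp, by rw [hg, Sym2.eq_swap]⟩
      · exact ⟨y, by simp, hg⟩
  · rintro ⟨u, hu, rfl⟩
    have huv : u ≠ v := by rintro rfl; exact he.2 hu
    refine ⟨Or.inr ?_, hs u huv⟩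
    obtain ⟨w, rfl⟩ := hu
    exact ⟨u, w, rfl, by rw [key u w rfl]; left; rw [Sym2.eq_swap]⟩

theorem star_inter {V : Type*} (G T : SimpleGraph V) (v : V) (hT : T.IsTree)
    (hs : ∀ u, u ≠ v → T.Adj v u) (e f : Sym2 V) (he : e ∈ G.edgeSet ∧ v ∉ e)
    (hf : f ∈ G.edgeSet ∧ v ∉ f) :
    cyclesIntersect T e f ↔ ∃ u, u ∈ e ∧ u ∈ f := by
  constructor
  · rintro ⟨g, ⟨h1, h2⟩, h3⟩
    obtain ⟨u, hu, rfl⟩ := (star_cyc G T v hT hs e he g).1 ⟨h1, h3⟩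
    obtain ⟨w, hw, h⟩ := (star_cyc G T v hT hs f hf _).1 ⟨h2, h3⟩
    have : u = w := by rw [Sym2.eq_iff] at h; grind
    exact ⟨u, hu, this ▸ hw⟩
  · rintro ⟨u, hu, hu'⟩
    have h1 := (star_cyc G T v hT hs e he s(v, u)).2 ⟨u, hu, rfl⟩
    have h2 := (star_cyc G T v hT hs f hf s(v, u)).2 ⟨u, hu', rfl⟩
    exact ⟨s(v, u), ⟨h1.1, h2.1⟩, h1.2⟩

/-- If a connected graph `G` admits a star spanning tree `T_s` with center
`v`, then `∩(T_s) = (1/2) Σ_{u ≠ v} (d(u) - 1)(d(u) - 2)`. -/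
theorem stmt_11 {V : Type*} [Fintype V] [DecidableEq V]
    (G Ts : SimpleGraph V) [DecidableRel G.Adj]
    (hG : G.Connected) (v : V) (hTs : IsStarSpanningTree G Ts v) :
    (treeInterNum G Ts : ℚ)
      = (1 / 2) * ∑ u ∈ Finset.univ.erase v,
          ((G.degree u : ℚ) - 1) * ((G.degree u : ℚ) - 2) := by
  obtain ⟨hle, hT, hs⟩ := hTs
  let A : V → Finset (Sym2 (Sym2 V)) := fun u =>
    (((G.neighborFinset u).erase v).offDiag.image (fun p : V × V => s(p.1, p.2))).image
      (Sym2.map (fun a => s(u, a)))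
  have memA : ∀ u p, p ∈ A u ↔ ∃ a b, a ≠ b ∧ a ≠ v ∧ b ≠ v ∧ G.Adj u a ∧ G.Adj u b ∧
      p = s(s(u, a), s(u, b)) := by
    intro u p
    simp only [A, Finset.mem_image, Finset.mem_offDiag, Finset.mem_erase, mem_neighborFinset]
    constructor
    · rintro ⟨_, ⟨⟨a, b⟩, h, rfl⟩, rfl⟩
      exact ⟨a, b, h.2.2, h.1.1, h.2.1.1, h.1.2, h.2.1.2, rfl⟩
    · rintro ⟨a, b, h1, h2, h3, h4, h5, rfl⟩
      exact ⟨_, ⟨(a, b), ⟨⟨h2, h4⟩, ⟨h3, h5⟩, h1⟩, rfl⟩, rfl⟩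
  have hset : {p : Sym2 (Sym2 V) | ∃ e f : Sym2 V, p = s(e, f) ∧ e ≠ f ∧
      e ∈ G.edgeSet \ Ts.edgeSet ∧ f ∈ G.edgeSet \ Ts.edgeSet ∧ cyclesIntersect Ts e f}
      = (((Finset.univ.erase v).biUnion A : Finset (Sym2 (Sym2 V))) : Set (Sym2 (Sym2 V))) := by
    ext p
    simp only [Set.mem_setOf_eq, Finset.coe_biUnion, Set.mem_iUnion, Finset.mem_coe,
      Finset.mem_erase, Finset.mem_univ, and_true, memA, star_mem G Ts v hT hs, exists_prop]
    constructor
    · rintro ⟨e, f, rfl, hne, he, hf, hi⟩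
      obtain ⟨u, ⟨a, rfl⟩, ⟨b, rfl⟩⟩ := (star_inter G Ts v hT hs e f he hf).1 hi
      have h1 := he.2
      have h2 := hf.2
      simp only [Sym2.mem_iff, not_or] at h1 h2
      exact ⟨u, Ne.symm h1.1, a, b, fun h => hne (by rw [h]), Ne.symm h1.2, Ne.symm h2.2,
        he.1, hf.1, rfl⟩
    · rintro ⟨u, hu, a, b, hab, ha, hb, h1, h2, rfl⟩
      have he : s(u, a) ∈ G.edgeSet ∧ v ∉ s(u, a) := ⟨h1, by simp [hu.symm, ha.symm]⟩
      have hf : s(u, b) ∈ G.edgeSet ∧ v ∉ s(u, b) := ⟨h2, by simp [hu.symm, hb.symm]⟩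
      exact ⟨_, _, rfl, by rw [Ne, Sym2.eq_iff]; grind, he, hf,
        (star_inter G Ts v hT hs _ _ he hf).2 ⟨u, by simp, by simp⟩⟩
  have hdisj : ∀ u w, u ≠ w → Disjoint (A u) (A w) := by
    intro u w huw
    rw [Finset.disjoint_left]
    intro p hp hq
    rw [memA] at hp hq
    obtain ⟨a, b, hab, -, -, h1, h2, rfl⟩ := hp
    obtain ⟨c, d, hcd, -, -, h3, h4, h⟩ := hq
    have := h1.ne
    have := h2.ne
    have := h3.ne
    have := h4.ne
    simp only [Sym2.eq_iff] at h
    grind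
  have hcard : ∀ u, u ≠ v →
      ((A u).card : ℚ) = (1 / 2) * (((G.degree u : ℚ) - 1) * ((G.degree u : ℚ) - 2)) := by
    intro u hu
    have hinj : Function.Injective (Sym2.map (fun a : V => s(u, a))) :=
      Sym2.map.injective (fun a b h => by
        have h' : s(u, a) = s(u, b) := h
        rw [Sym2.eq_iff] at h'
        grind)
    have hv : v ∈ G.neighborFinset u := by
      rw [mem_neighborFinset]
      exact hle (hs u hu).symm
    have hc : (A u).card = (((G.neighborFinset u).erase v).card).choose 2 := by
      simp only [A]
      rw [Finset.card_image_of_injective _ hinj]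
      exact Sym2.card_image_offDiag _
    have hd : ((((G.neighborFinset u).erase v).card : ℕ) : ℚ) = (G.degree u : ℚ) - 1 := by
      have := Finset.card_erase_add_one hv
      rw [card_neighborFinset_eq_degree] at this
      rw [← this]
      push_cast
      ring
    rw [hc, Nat.cast_choose_two, hd]
    ring
  unfold treeInterNum
  rw [hset, Set.ncard_coe_finset, Finset.card_biUnion (fun u _ w _ h => hdisj u w h),
    Finset.mul_sum]
  push_cast
  exact Finset.sum_congr rfl (fun u hu => hcard u (Finset.ne_of_mem_erase hu))
end

section
/- Let G be a finite connected simple graph on n vertices with m edges that admits a star spanning tree T_s, and let d be the degree vector of G. Then the tree intersection number of T_s satisfies ∩(T_s) = (1/2)[‖d‖₂² - 6m - (n-1)(n-6)], where ‖d‖₂² = Σ_{u ∈ V} d(u)². -/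
open SimpleGraph

theorem star_adj_aux {V : Type*} {T : SimpleGraph V} {v : V} (hT : T.IsTree)
    (hv : ∀ u, u ≠ v → T.Adj v u) {a b : V} (ha : a ≠ v) (hb : b ≠ v) : ¬ T.Adj a b := by
  intro hab
  have hne := hab.ne
  let p : T.Walk a b := Walk.cons hab Walk.nil
  let q : T.Walk a b := Walk.cons (hv a ha).symm (Walk.cons (hv b hb) Walk.nil)
  have hp : p.IsPath := by simp [p, hne]
  have hq : q.IsPath := by simp [q, hne, ha, hb.symm]
  have := hT.isAcyclic.path_unique ⟨p, hp⟩ ⟨q, hq⟩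
  have h2 : p.length = q.length := by rw [Subtype.mk.injEq] at this; rw [this]
  simp [p, q] at h2

theorem star_path_aux {V : Type*} {T : SimpleGraph V} {v : V} (hT : T.IsTree)
    (hv : ∀ u, u ≠ v → T.Adj v u) {a b : V} (ha : a ≠ v) (hb : b ≠ v) (hne : a ≠ b)
    (g : Sym2 V) : g ∈ pathEdges T a b ↔ g = s(v, a) ∨ g = s(v, b) := by
  let q : T.Walk a b := Walk.cons (hv a ha).symm (Walk.cons (hv b hb) Walk.nil)
  have hq : q.IsPath := by simp [q, hne, ha, hb.symm]
  have hqe : g ∈ q.edges ↔ g = s(v, a) ∨ g = s(v, b) := by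
    simp [q, Sym2.eq_swap (a := a) (b := v)]
  rw [← hqe]
  constructor
  · rintro ⟨p, hp, hg⟩
    have := hT.isAcyclic.path_unique ⟨p, hp⟩ ⟨q, hq⟩
    rw [Subtype.mk.injEq] at this
    rwa [← this]
  · intro h
    exact ⟨q, hq, h⟩

theorem star_cyc_aux {V : Type*} {T : SimpleGraph V} {v : V} (hT : T.IsTree)
    (hv : ∀ u, u ≠ v → T.Adj v u) {a b : V} (ha : a ≠ v) (hb : b ≠ v) (hne : a ≠ b)
    (g : Sym2 V) : (g ∈ cycEdges T s(a, b) ∧ g ∈ T.edgeSet) ↔ ∃ u ∈ s(a, b), g = s(v, u) := by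
  constructor
  · rintro ⟨h | ⟨x, y, hxy, h⟩, h2⟩
    · subst h
      exact absurd h2 (star_adj_aux hT hv ha hb)
    · rw [Sym2.eq_iff] at hxy
      rcases hxy with ⟨rfl, rfl⟩ | ⟨rfl, rfl⟩
      · rw [star_path_aux hT hv ha hb hne] at h
        rcases h with h | h
        · exact ⟨a, by simp, h⟩
        · exact ⟨b, by simp, h⟩
      · rw [star_path_aux hT hv hb ha hne.symm] at h
        rcases h with h | h
        · exact ⟨b, by simp, h⟩
        · exact ⟨a, by simp, h⟩
  · rintro ⟨u, hu, rfl⟩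
    rw [Sym2.mem_iff] at hu
    refine ⟨Or.inr ⟨a, b, rfl, ?_⟩, ?_⟩
    · rw [star_path_aux hT hv ha hb hne]
      rcases hu with rfl | rfl <;> simp
    · rcases hu with rfl | rfl
      · exact hv _ ha
      · exact hv _ hb

theorem star_inter_aux {V : Type*} {G T : SimpleGraph V} {v : V} (hT : T.IsTree)
    (hv : ∀ u, u ≠ v → T.Adj v u) {e f : Sym2 V} (he : e ∈ (G \ T).edgeSet)
    (hf : f ∈ (G \ T).edgeSet) : cyclesIntersect T e f ↔ ∃ u, u ∈ e ∧ u ∈ f := by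
  have key : ∀ e : Sym2 V, e ∈ (G \ T).edgeSet → ∀ g,
      (g ∈ cycEdges T e ∧ g ∈ T.edgeSet) ↔ ∃ u ∈ e, g = s(v, u) := by
    intro e he g
    induction e with
    | _ a b =>
      rw [mem_edgeSet, sdiff_adj] at he
      have ha : a ≠ v := by
        rintro rfl
        exact he.2 (hv _ he.1.ne.symm)
      have hb : b ≠ v := by
        rintro rfl
        exact he.2 (hv _ he.1.ne).symm
      exact star_cyc_aux hT hv ha hb he.1.ne g
  constructor
  · rintro ⟨g, ⟨h1, h2⟩, h3⟩
    obtain ⟨u, hu, rfl⟩ := (key e he g).1 ⟨h1, h3⟩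
    obtain ⟨w, hw, h⟩ := (key f hf _).1 ⟨h2, h3⟩
    have : u = w := by
      have huw : u = w ∨ v = w ∧ u = v := by simpa using h
      rcases huw with huw | ⟨h1, h2⟩
      · exact huw
      · exact h2.trans h1
    subst this
    exact ⟨u, hu, hw⟩
  · rintro ⟨u, hu, hw⟩
    have h1 := (key e he s(v, u)).2 ⟨u, hu, rfl⟩
    have h2 := (key f hf s(v, u)).2 ⟨u, hw, rfl⟩
    exact ⟨_, ⟨h1.1, h2.1⟩, h1.2⟩

open Classical in
theorem star_count_aux {V : Type*} [Fintype V] {G T : SimpleGraph V} {v : V} (hT : T.IsTree)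
    (hv : ∀ u, u ≠ v → T.Adj v u) :
    treeInterNum G T = ∑ u : V, ((G \ T).degree u).choose 2 := by
  have hset : {p : Sym2 (Sym2 V) | ∃ e f : Sym2 V, p = s(e, f) ∧ e ≠ f ∧
      e ∈ G.edgeSet \ T.edgeSet ∧ f ∈ G.edgeSet \ T.edgeSet ∧ cyclesIntersect T e f}
      = ((Finset.univ.biUnion fun u : V =>
        ((G \ T).incidenceFinset u).offDiag.image (fun x => s(x.1, x.2)) :
          Finset (Sym2 (Sym2 V))) : Set (Sym2 (Sym2 V))) := by
    ext p
    simp only [Set.mem_setOf_eq, Finset.coe_biUnion, Finset.mem_coe, Finset.mem_univ,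
      Set.iUnion_true, Set.mem_iUnion, Finset.mem_image, Finset.mem_offDiag,
      mem_incidenceFinset, ← edgeSet_sdiff, incidenceSet, Set.mem_setOf_eq, Prod.exists]
    constructor
    · rintro ⟨e, f, rfl, hne, he, hf, h⟩
      obtain ⟨u, h1, h2⟩ := (star_inter_aux hT hv he hf).1 h
      exact ⟨u, e, f, ⟨⟨he, h1⟩, ⟨hf, h2⟩, hne⟩, rfl⟩
    · rintro ⟨u, e, f, ⟨⟨he, h1⟩, ⟨hf, h2⟩, hne⟩, rfl⟩
      exact ⟨e, f, rfl, hne, he, hf, (star_inter_aux hT hv he hf).2 ⟨u, h1, h2⟩⟩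
  rw [treeInterNum, hset, Set.ncard_coe_finset, Finset.card_biUnion]
  · refine Finset.sum_congr rfl fun u _ => ?_
    rw [← card_incidenceFinset_eq_degree]
    exact Sym2.card_image_offDiag _
  · intro u _ w _ huw
    rw [Function.onFun, Finset.disjoint_left]
    intro p hp hq
    simp only [Finset.mem_image, Finset.mem_offDiag, mem_incidenceFinset, incidenceSet,
      Set.mem_setOf_eq, Prod.exists] at hp hq
    obtain ⟨e, f, ⟨⟨_, h1⟩, ⟨_, h2⟩, hne⟩, rfl⟩ := hp
    obtain ⟨e2, f2, ⟨⟨_, h3⟩, ⟨_, h4⟩, _⟩, h⟩ := hq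
    have : w ∈ e ∧ w ∈ f := by
      rcases Sym2.eq_iff.1 h with ⟨rfl, rfl⟩ | ⟨rfl, rfl⟩
      · exact ⟨h3, h4⟩
      · exact ⟨h4, h3⟩
    exact hne (((Sym2.mem_and_mem_iff huw).1 ⟨h1, this.1⟩).trans
      ((Sym2.mem_and_mem_iff huw).1 ⟨h2, this.2⟩).symm)

/-- If a connected graph `G` on `n` vertices with `m` edges admits a star
spanning tree `T_s`, and `d` is the degree vector of `G`, then
`∩(T_s) = (1/2)[‖d‖₂² - 6m - (n-1)(n-6)]`. -/
theorem stmt_12 {V : Type*} [Fintype V] (G Ts : SimpleGraph V) [DecidableRel G.Adj]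
    (hG : G.Connected) (v : V) (hTs : IsStarSpanningTree G Ts v)
    (n m : ℕ) (hn : Fintype.card V = n) (hm : G.edgeSet.ncard = m) :
    (treeInterNum G Ts : ℚ)
      = (1 / 2) * ((∑ u : V, (G.degree u : ℚ) ^ 2) - 6 * (m : ℚ)
          - ((n : ℚ) - 1) * ((n : ℚ) - 6)) := by
  classical
  obtain ⟨hle, hT, hv⟩ := hTs
  have hdv : (G.degree v : ℚ) = n - 1 := by
    have : G.neighborFinset v = Finset.univ.erase v := by
      ext u
      simp only [mem_neighborFinset, Finset.mem_erase, Finset.mem_univ, and_true]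
      exact ⟨fun h => h.ne.symm, fun h => hle (hv u h)⟩
    have h1 : 1 ≤ Fintype.card V := Fintype.card_pos_iff.2 ⟨v⟩
    rw [← card_neighborFinset_eq_degree, this, Finset.card_erase_of_mem (Finset.mem_univ _),
      Finset.card_univ, Nat.cast_sub h1, hn, Nat.cast_one]
  have hHv : (G \ Ts).degree v = 0 := by
    rw [← card_neighborFinset_eq_degree, Finset.card_eq_zero, Finset.eq_empty_iff_forall_notMem]
    intro u hu
    rw [mem_neighborFinset, sdiff_adj] at hu
    exact hu.2 (hv u hu.1.ne.symm)
  have hHu : ∀ u, u ≠ v → ((G \ Ts).degree u : ℚ) = G.degree u - 1 := by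
    intro u hu
    have : G.neighborFinset u = insert v ((G \ Ts).neighborFinset u) := by
      ext w
      simp only [mem_neighborFinset, Finset.mem_insert, sdiff_adj]
      constructor
      · intro h
        by_cases hw : w = v
        · exact Or.inl hw
        · exact Or.inr ⟨h, star_adj_aux hT hv hu hw⟩
      · rintro (rfl | h)
        · exact (hle (hv u hu)).symm
        · exact h.1
    have h2 : v ∉ (G \ Ts).neighborFinset u := by
      rw [mem_neighborFinset, sdiff_adj]
      exact fun h => h.2 (hv u hu).symm
    rw [← card_neighborFinset_eq_degree G, this, Finset.card_insert_of_notMem h2,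
      card_neighborFinset_eq_degree]
    push_cast
    ring
  have hsum : ∑ u : V, (G.degree u : ℚ) = 2 * m := by
    have h := G.sum_degrees_eq_twice_card_edges
    have h2 : G.edgeFinset.card = m := by
      rw [← hm, ← coe_edgeFinset, Set.ncard_coe_finset]
    rw [h2] at h
    exact_mod_cast h
  have hc : (treeInterNum G Ts : ℚ) = ∑ u : V, (((G \ Ts).degree u).choose 2 : ℚ) := by
    rw [star_count_aux hT hv]
    push_cast
    refine Finset.sum_congr rfl fun u _ => ?_
    congr!
  rw [hc]
  have hterm : ∀ u : V, (((G \ Ts).degree u).choose 2 : ℚ)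
      = (1 / 2) * ((G.degree u : ℚ) ^ 2 - 3 * G.degree u + 2)
        - if u = v then (1 / 2) * (((n : ℚ) - 1) ^ 2 - 3 * ((n : ℚ) - 1) + 2) else 0 := by
    intro u
    by_cases hu : u = v
    · subst hu
      rw [hHv, if_pos rfl, hdv]
      simp
    · rw [if_neg hu, Nat.cast_choose_two, hHu u hu]
      ring
  rw [Finset.sum_congr rfl fun u _ => hterm u, Finset.sum_sub_distrib, ← Finset.mul_sum,
    Finset.sum_add_distrib, Finset.sum_sub_distrib, ← Finset.mul_sum, hsum]
  simp [hn]
  ring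
end

section
/- Let G be a finite connected simple graph that admits a star spanning tree T_s with center v. Then for every spanning tree T of G that differs from T_s by exactly one edge replacement (i.e., T = (T_s - {e}) ∪ {e'} for some edge e of T_s and some edge e' of G not in T_s), one has ∩(T_s) ≤ ∩(T). In other words, T_s is a local minimum with respect to the tree intersection number in the spanning tree graph of G. -/
open SimpleGraph

theorem aux_path2 {V : Type*} {T : SimpleGraph V} {x y z : V} (h1 : T.Adj x y) (h2 : T.Adj y z)
    (hxz : x ≠ z) : ∃ p : T.Walk x z, p.IsPath ∧ p.edges = [s(x, y), s(y, z)] := by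
  refine ⟨Walk.cons h1 (Walk.cons h2 Walk.nil), ?_, by simp⟩
  have := h1.ne
  have := h2.ne
  simp [Walk.cons_isPath_iff]
  grind

theorem aux_path3 {V : Type*} {T : SimpleGraph V} {x y z w : V} (h1 : T.Adj x y) (h2 : T.Adj y z)
    (h3 : T.Adj z w) (hxz : x ≠ z) (hxw : x ≠ w) (hyw : y ≠ w) :
    ∃ p : T.Walk x w, p.IsPath ∧ p.edges = [s(x, y), s(y, z), s(z, w)] := by
  refine ⟨Walk.cons h1 (Walk.cons h2 (Walk.cons h3 Walk.nil)), ?_, by simp⟩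
  have := h1.ne
  have := h2.ne
  have := h3.ne
  simp [Walk.cons_isPath_iff]
  grind

theorem aux_mem {V : Type*} {T : SimpleGraph V} {x y : V} {g : Sym2 V} (p : T.Walk x y)
    (hp : p.IsPath) (hg : g ∈ p.edges) : g ∈ cycEdges T s(x, y) :=
  Or.inr ⟨x, y, rfl, p, hp, hg⟩

/-- In a star, an edge of both tree and tree-cycle is a spoke at an end of the cycle-edge. -/
theorem aux_star {V : Type*} {Ts : SimpleGraph V} {v : V} (hT : Ts.IsTree)
    (hs : ∀ u, u ≠ v → Ts.Adj v u) {e g : Sym2 V} (he : e ∉ Ts.edgeSet) (hd : ¬ e.IsDiag)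
    (hg : g ∈ cycEdges Ts e) (hgT : g ∈ Ts.edgeSet) : ∃ w, w ∈ e ∧ g = s(v, w) := by
  rcases hg with rfl | ⟨x, y, rfl, p, hp, hgp⟩
  · exact absurd hgT he
  · have hxy : x ≠ y := by simpa using hd
    have hx : x ≠ v := by
      rintro rfl
      exact he (hs y hxy.symm)
    have hy : y ≠ v := by
      rintro rfl
      exact he (hs x hx).symm
    obtain ⟨q, hq, hqe⟩ := aux_path2 (hs x hx).symm (hs y hy) hxy
    have : p = q := congrArg Subtype.val (hT.isAcyclic.path_unique ⟨p, hp⟩ ⟨q, hq⟩)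
    subst this
    rw [hqe] at hgp
    simp only [List.mem_cons, List.not_mem_nil, or_false] at hgp
    rcases hgp with h | h
    · exact ⟨x, by simp, by rw [h, Sym2.eq_swap]⟩
    · exact ⟨y, by simp, h⟩

theorem aux_edge {V : Type*} {Ts : SimpleGraph V} {v : V} (hT : Ts.IsTree)
    (hs : ∀ u, u ≠ v → Ts.Adj v u) {e : Sym2 V} (he : e ∈ Ts.edgeSet) :
    ∃ a, a ≠ v ∧ e = s(v, a) := by
  induction e with | _ x y
  have hxy : Ts.Adj x y := he
  by_cases hx : x = v
  · subst hx
    exact ⟨y, hxy.ne.symm, rfl⟩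
  by_cases hy : y = v
  · subst hy
    exact ⟨x, hxy.ne, Sym2.eq_swap⟩
  obtain ⟨q, hq, hqe⟩ := aux_path2 (hs x hx).symm (hs y hy) hxy.ne
  have hp : (Walk.cons hxy Walk.nil).IsPath := by simp [Walk.cons_isPath_iff, hxy.ne]
  have : Walk.cons hxy Walk.nil = q :=
    congrArg Subtype.val (hT.isAcyclic.path_unique ⟨_, hp⟩ ⟨q, hq⟩)
  subst this
  simp at hqe

theorem stmt_13 {V : Type*} [Fintype V] (G Ts T : SimpleGraph V)
    (hG : G.Connected) (v : V) (hTs : IsStarSpanningTree G Ts v)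
    (hle : T ≤ G) (hT : T.IsTree)
    (e e' : Sym2 V) (he : e ∈ Ts.edgeSet) (he' : e' ∈ G.edgeSet \ Ts.edgeSet)
    (hrepl : T.edgeSet = (Ts.edgeSet \ {e}) ∪ {e'}) :
    treeInterNum G Ts ≤ treeInterNum G T := by
  classical
  obtain ⟨hTsG, hTsT, hs⟩ := hTs
  obtain ⟨a, hav, rfl⟩ := aux_edge hTsT hs he
  have hedge : ∀ g, g ∈ T.edgeSet ↔ (g ∈ Ts.edgeSet ∧ g ≠ s(v, a)) ∨ g = e' := by
    intro g
    rw [hrepl]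
    simp [or_comm]
  have hae' : a ∈ e' := by
    haveI : Nontrivial V := ⟨a, v, hav⟩
    obtain ⟨u, hu⟩ := hT.isConnected.preconnected.exists_adj_of_nontrivial a
    rcases (hedge s(a, u)).1 hu with ⟨h1, h2⟩ | h
    · exfalso
      obtain ⟨w, hw, hw'⟩ := aux_edge hTsT hs h1
      grind
    · rw [← h]
      simp
  obtain ⟨b, rfl⟩ := hae'
  have hba : a ≠ b := he'.1.ne
  have hbv : b ≠ v := by
    rintro rfl
    exact he'.2 (hs a hav).symm
  have hab : T.Adj a b := (hedge s(a, b)).2 (Or.inr rfl)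
  have hsT : ∀ x, x ≠ v → x ≠ a → T.Adj v x := by
    intro x hx hxa
    exact (hedge s(v, x)).2 (Or.inl ⟨hs x hx, by grind⟩)
  have hvb := hsT b hbv hba.symm
  -- no cycle-edge of the star contains the center
  have hnv : ∀ x y, s(x, y) ∈ G.edgeSet \ Ts.edgeSet → x ≠ v ∧ y ≠ v ∧ x ≠ y := by
    intro x y h
    have hxy : x ≠ y := h.1.ne
    refine ⟨?_, ?_, hxy⟩
    · rintro rfl
      exact h.2 (hs y hxy.symm)
    · rintro rfl
      exact h.2 (hs x hxy).symm
  have K2 : ∀ y, s(a, y) ∈ G.edgeSet \ Ts.edgeSet → y ≠ b →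
      s(a, b) ∈ cycEdges T s(a, y) ∧ s(v, b) ∈ cycEdges T s(a, y) ∧
        s(v, y) ∈ cycEdges T s(a, y) := by
    intro y h hyb
    obtain ⟨h1, h2, h3⟩ := hnv _ _ h
    obtain ⟨p, hp, hpe⟩ := aux_path3 hab hvb.symm (hsT y h2 h3.symm) hav h3 hyb.symm
    refine ⟨aux_mem p hp ?_, aux_mem p hp ?_, aux_mem p hp ?_⟩ <;> rw [hpe] <;> simp
  have K1 : ∀ x f, x ∈ f → f ∈ G.edgeSet \ Ts.edgeSet → f ≠ s(a, b) → x ≠ a →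
      s(v, x) ∈ cycEdges T f := by
    rintro x f ⟨y, rfl⟩ h hf hxa
    obtain ⟨h1, h2, h3⟩ := hnv _ _ h
    by_cases hya : y = a
    · subst hya
      rw [Sym2.eq_swap] at h hf ⊢
      have := (K2 x h (by grind)).2.2
      rwa [Sym2.eq_swap (a := v)] at this ⊢
    · obtain ⟨p, hp, hpe⟩ := aux_path2 (hsT x h1 hxa).symm (hsT y h2 hya) h3
      refine aux_mem p hp ?_
      rw [hpe]
      simp
  have K3 : s(a, b) ∈ cycEdges T s(v, a) ∧ s(v, b) ∈ cycEdges T s(v, a) := by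
    obtain ⟨p, hp, hpe⟩ := aux_path2 hvb hab.symm hav.symm
    refine ⟨aux_mem p hp ?_, aux_mem p hp ?_⟩ <;> rw [hpe] <;> simp
  have hne : s(v, a) ≠ s(a, b) := by
    intro h
    exact he'.2 (h ▸ he)
  set φ := Equiv.swap s(a, b) s(v, a) with hφ
  have hφ1 : φ s(a, b) = s(v, a) := Equiv.swap_apply_left _ _
  have hφ2 : ∀ f ∈ G.edgeSet \ Ts.edgeSet, f ≠ s(a, b) → φ f = f := by
    intro f hf hfa
    refine Equiv.swap_apply_of_ne_of_ne hfa ?_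
    rintro rfl
    exact hf.2 he
  have hφm : ∀ f ∈ G.edgeSet \ Ts.edgeSet, φ f ∈ G.edgeSet \ T.edgeSet := by
    intro f hf
    by_cases h : f = s(a, b)
    · rw [h, hφ1]
      refine ⟨hTsG (hs a hav), ?_⟩
      rw [hedge]
      tauto
    · rw [hφ2 f hf h]
      refine ⟨hf.1, ?_⟩
      rw [hedge]
      have := hf.2
      tauto
  -- crossing with the replaced edge
  have L : ∀ f w, f ∈ G.edgeSet \ Ts.edgeSet → f ≠ s(a, b) → w ∈ f → w ∈ s(a, b) →
      cyclesIntersect T s(v, a) f := by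
    intro f w hf hfa hwf hw
    by_cases hwa : w = a
    · subst hwa
      obtain ⟨y, rfl⟩ := hwf
      exact ⟨s(w, b), ⟨K3.1, (K2 y hf (by grind)).1⟩, hab⟩
    · have : w = b := by
        rw [Sym2.mem_iff] at hw
        tauto
      subst this
      exact ⟨s(v, w), ⟨K3.2, K1 w f hwf hf hfa hwa⟩, hvb⟩
  have main : ∀ f g w, f ∈ G.edgeSet \ Ts.edgeSet → g ∈ G.edgeSet \ Ts.edgeSet → f ≠ g →
      w ∈ f → w ∈ g → cyclesIntersect T (φ f) (φ g) := by
    intro f g w hf hg hfg hwf hwg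
    by_cases h1 : f = s(a, b)
    · subst h1
      rw [hφ1, hφ2 g hg hfg.symm]
      exact L g w hg hfg.symm hwg hwf
    by_cases h2 : g = s(a, b)
    · subst h2
      rw [hφ1, hφ2 f hf hfg]
      have := L f w hf hfg hwf hwg
      unfold cyclesIntersect at this ⊢
      rwa [Set.inter_comm (cycEdges T f)]
    rw [hφ2 f hf h1, hφ2 g hg h2]
    by_cases hwa : w = a
    · subst hwa
      obtain ⟨y, rfl⟩ := hwf
      obtain ⟨z, rfl⟩ := hwg
      exact ⟨s(w, b), ⟨(K2 y hf (by grind)).1, (K2 z hg (by grind)).1⟩, hab⟩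
    · have hwv : w ≠ v := by
        obtain ⟨y, rfl⟩ := hwf
        exact (hnv _ _ hf).1
      exact ⟨s(v, w), ⟨K1 w f hwf hf h1 hwa, K1 w g hwg hg h2 hwa⟩, hsT w hwv hwa⟩
  unfold treeInterNum
  refine Set.ncard_le_ncard_of_injOn (Sym2.map φ) ?_ (Sym2.map.injective φ.injective).injOn
    (Set.toFinite _)
  rintro _ ⟨f, g, rfl, hfg, hf, hg, c, ⟨hcf, hcg⟩, hcT⟩
  refine ⟨φ f, φ g, by simp, φ.injective.ne hfg, hφm f hf, hφm g hg, ?_⟩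
  obtain ⟨w, hw, hw'⟩ := aux_star hTsT hs hf.2 (G.not_isDiag_of_mem_edgeSet hf.1) hcf hcT
  obtain ⟨z, hz, hz'⟩ := aux_star hTsT hs hg.2 (G.not_isDiag_of_mem_edgeSet hg.1) hcg hcT
  have hwz : w = z := Sym2.congr_right.1 (hw'.symm.trans hz')
  exact main f g w hf hg hfg hw (hwz ▸ hz)
end

section
/- There is no map f from the set of all finite trees to the real numbers such that for every finite connected simple graph G and all spanning trees T₁, T₂ of G, one has f(T₁) ≤ f(T₂) if and only if ∩_G(T₁) ≤ ∩_G(T₂). That is, no intrinsic tree invariant is positively correlated with the tree intersection number for every graph. -/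
open SimpleGraph

/-- The fan: hub `0` joined to the path `1-2-3-4`. -/
abbrev fanG : SimpleGraph (Fin 5) :=
  SimpleGraph.fromEdgeSet {s(0,1), s(0,2), s(0,3), s(0,4), s(1,2), s(2,3), s(3,4)}

/-- First spanning tree. -/
abbrev treeA : SimpleGraph (Fin 5) :=
  SimpleGraph.fromEdgeSet {s(0,1), s(0,2), s(0,3), s(3,4)}

/-- Second spanning tree. -/
abbrev treeB : SimpleGraph (Fin 5) :=
  SimpleGraph.fromEdgeSet {s(0,1), s(0,2), s(0,4), s(2,3)}

lemma treeA_edges : treeA.edgeSet = {s(0,1), s(0,2), s(0,3), s(3,4)} := by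
  rw [edgeSet_fromEdgeSet]
  ext e
  simp only [Set.mem_sdiff, Set.mem_insert_iff, Set.mem_singleton_iff, Sym2.mem_diagSet]
  revert e
  decide

lemma treeB_edges : treeB.edgeSet = {s(0,1), s(0,2), s(0,4), s(2,3)} := by
  rw [edgeSet_fromEdgeSet]
  ext e
  simp only [Set.mem_sdiff, Set.mem_insert_iff, Set.mem_singleton_iff, Sym2.mem_diagSet]
  revert e
  decide

lemma diffA : fanG.edgeSet \ treeA.edgeSet = {s(1,2), s(2,3), s(0,4)} := by
  rw [treeA_edges, edgeSet_fromEdgeSet]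
  ext e
  simp only [Set.mem_sdiff, Set.mem_insert_iff, Set.mem_singleton_iff, Sym2.mem_diagSet]
  revert e
  decide

lemma diffB : fanG.edgeSet \ treeB.edgeSet = {s(1,2), s(3,4), s(0,3)} := by
  rw [treeB_edges, edgeSet_fromEdgeSet]
  ext e
  simp only [Set.mem_sdiff, Set.mem_insert_iff, Set.mem_singleton_iff, Sym2.mem_diagSet]
  revert e
  decide

lemma connected_of_reach (T : SimpleGraph (Fin 5)) (h : ∀ v, T.Reachable 0 v) :
    T.Connected :=
  { preconnected := fun u v => (h u).symm.trans (h v) }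

lemma treeA_isTree : treeA.IsTree := by
  rw [isTree_iff_connected_and_card]
  refine ⟨connected_of_reach _ ?_, ?_⟩
  · have h1 : treeA.Adj 0 1 := by simp
    have h2 : treeA.Adj 0 2 := by simp
    have h3 : treeA.Adj 0 3 := by simp
    have h4 : treeA.Adj 3 4 := by simp
    intro v
    fin_cases v
    · exact Reachable.refl _
    · exact h1.reachable
    · exact h2.reachable
    · exact h3.reachable
    · exact h3.reachable.trans h4.reachable
  · rw [treeA_edges, Nat.card_coe_set_eq]
    have : ({s(0,1), s(0,2), s(0,3), s(3,4)} : Set (Sym2 (Fin 5))) =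
      (({s(0,1), s(0,2), s(0,3), s(3,4)} : Finset (Sym2 (Fin 5))) : Set _) := by simp
    rw [this, Set.ncard_coe_finset, Nat.card_eq_fintype_card]
    decide

lemma treeB_isTree : treeB.IsTree := by
  rw [isTree_iff_connected_and_card]
  refine ⟨connected_of_reach _ ?_, ?_⟩
  · have h1 : treeB.Adj 0 1 := by simp
    have h2 : treeB.Adj 0 2 := by simp
    have h3 : treeB.Adj 0 4 := by simp
    have h4 : treeB.Adj 2 3 := by simp
    intro v
    fin_cases v
    · exact Reachable.refl _
    · exact h1.reachable
    · exact h2.reachable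
    · exact h2.reachable.trans h4.reachable
    · exact h3.reachable
  · rw [treeB_edges, Nat.card_coe_set_eq]
    have : ({s(0,1), s(0,2), s(0,4), s(2,3)} : Set (Sym2 (Fin 5))) =
      (({s(0,1), s(0,2), s(0,4), s(2,3)} : Finset (Sym2 (Fin 5))) : Set _) := by simp
    rw [this, Set.ncard_coe_finset, Nat.card_eq_fintype_card]
    decide

lemma mem_cyc {V : Type*} {T : SimpleGraph V} (hT : T.IsTree) {x y : V} (p : T.Walk x y)
    (hp : p.IsPath) {f : Sym2 V} (hf : f ∈ cycEdges T s(x, y)) (hfT : f ∈ T.edgeSet)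
    (hn : s(x, y) ∉ T.edgeSet) : f ∈ p.edges := by
  rcases hf with rfl | ⟨a, b, hab, q, hq, hfq⟩
  · exact absurd hfT hn
  · rcases Sym2.eq_iff.1 hab with ⟨rfl, rfl⟩ | ⟨rfl, rfl⟩
    · rwa [(hT.existsUnique_path x y).unique hp hq]
    · rw [(hT.existsUnique_path x y).unique hp hq.reverse]
      simpa using hfq

lemma cyc_of_mem {V : Type*} {T : SimpleGraph V} {x y : V} (p : T.Walk x y)
    (hp : p.IsPath) {f : Sym2 V} (hf : f ∈ p.edges) : f ∈ cycEdges T s(x, y) :=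
  Or.inr ⟨x, y, rfl, p, hp, hf⟩

lemma not_inter : ¬ cyclesIntersect treeA s(1,2) s(0,4) := by
  rintro ⟨f, ⟨h1, h2⟩, h3⟩
  have a1 : treeA.Adj 1 0 := by simp
  have a2 : treeA.Adj 0 2 := by simp
  have a3 : treeA.Adj 0 3 := by simp
  have a4 : treeA.Adj 3 4 := by simp
  have m1 := mem_cyc treeA_isTree (.cons a1 (.cons a2 .nil)) (by simp [Walk.isPath_def]) h1 h3
    (by rw [treeA_edges]; simp)
  have m2 := mem_cyc treeA_isTree (.cons a3 (.cons a4 .nil)) (by simp [Walk.isPath_def]) h2 h3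
    (by rw [treeA_edges]; simp)
  simp only [Walk.edges_cons, Walk.edges_nil, List.mem_cons, List.not_mem_nil, or_false] at m1 m2
  revert f
  intro f _ _ _ m1 m2
  revert f
  simp

lemma cyclesIntersect_symm {V : Type*} {T : SimpleGraph V} {e f : Sym2 V}
    (h : cyclesIntersect T e f) : cyclesIntersect T f e := by
  obtain ⟨g, ⟨h1, h2⟩, h3⟩ := h
  exact ⟨g, ⟨h2, h1⟩, h3⟩

lemma interA : treeInterNum fanG treeA ≤ 2 := by
  unfold treeInterNum
  refine (Set.ncard_le_ncard (t := {s(s(1,2),s(2,3)), s(s(2,3),s(0,4))}) ?_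
    (Set.toFinite _)).trans ((Set.ncard_insert_le _ _).trans (by simp))
  rintro p ⟨e, f, rfl, hne, he, hf, hi⟩
  rw [diffA] at he hf
  simp only [Set.mem_insert_iff, Set.mem_singleton_iff] at he hf ⊢
  rcases he with rfl | rfl | rfl <;> rcases hf with rfl | rfl | rfl
  · exact absurd rfl hne
  · exact Or.inl rfl
  · exact absurd hi not_inter
  · exact Or.inl Sym2.eq_swap
  · exact absurd rfl hne
  · exact Or.inr rfl
  · exact absurd (cyclesIntersect_symm hi) not_inter
  · exact Or.inr Sym2.eq_swap
  · exact absurd rfl hne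

lemma interB : 3 ≤ treeInterNum fanG treeB := by
  unfold treeInterNum
  have a1 : treeB.Adj 1 0 := by simp
  have a2 : treeB.Adj 0 2 := by simp
  have a3 : treeB.Adj 3 2 := by simp
  have a4 : treeB.Adj 0 4 := by simp
  have c1 : s(0,2) ∈ cycEdges treeB s(1,2) :=
    cyc_of_mem (.cons a1 (.cons a2 .nil)) (by simp [Walk.isPath_def]) (by simp)
  have c2 : s(0,2) ∈ cycEdges treeB s(3,4) :=
    cyc_of_mem (.cons a3 (.cons a2.symm (.cons a4 .nil))) (by simp [Walk.isPath_def]) (by simp)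
  have c3 : s(0,2) ∈ cycEdges treeB s(0,3) :=
    cyc_of_mem (.cons a2 (.cons a3.symm .nil)) (by simp [Walk.isPath_def]) (by simp)
  have c0 : s(0,2) ∈ treeB.edgeSet := a2
  have hcard : (({s(s(1,2),s(3,4)), s(s(1,2),s(0,3)), s(s(3,4),s(0,3))} :
      Finset (Sym2 (Sym2 (Fin 5)))) : Set (Sym2 (Sym2 (Fin 5)))).ncard = 3 := by
    rw [Set.ncard_coe_finset]
    decide
  rw [← hcard]
  refine Set.ncard_le_ncard ?_ (Set.toFinite _)
  intro p hp
  simp only [Finset.coe_insert, Finset.coe_singleton, Set.mem_insert_iff,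
    Set.mem_singleton_iff] at hp
  simp only [diffB]
  rcases hp with rfl | rfl | rfl
  · exact ⟨_, _, rfl, by decide, by simp, by simp, _, ⟨c1, c2⟩, c0⟩
  · exact ⟨_, _, rfl, by decide, by simp, by simp, _, ⟨c1, c3⟩, c0⟩
  · exact ⟨_, _, rfl, by decide, by simp, by simp, _, ⟨c2, c3⟩, c0⟩

/-- The vertex bijection carrying `treeA` to `treeB`. -/
def permAB : Fin 5 ≃ Fin 5 where
  toFun := ![0, 1, 4, 2, 3]
  invFun := ![0, 1, 3, 4, 2]
  left_inv := by decide
  right_inv := by decide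

lemma isoAB : Nonempty (treeA ≃g treeB) := by
  refine ⟨⟨permAB, ?_⟩⟩
  intro a b
  simp only [fromEdgeSet_adj, Set.mem_insert_iff, Set.mem_singleton_iff]
  revert a b
  decide

lemma treeA_le : treeA ≤ fanG := by
  apply fromEdgeSet_mono
  intro e
  simp only [Set.mem_insert_iff, Set.mem_singleton_iff]
  tauto

lemma treeB_le : treeB ≤ fanG := by
  apply fromEdgeSet_mono
  intro e
  simp only [Set.mem_insert_iff, Set.mem_singleton_iff]
  tauto

/-- There is no intrinsic tree invariant `f` (a real-valued map on finite
trees, depending only on the isomorphism type of the tree) such that for every finite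
connected simple graph `G` and all spanning trees `T₁, T₂` of `G`,
`f(T₁) ≤ f(T₂) ↔ ∩_G(T₁) ≤ ∩_G(T₂)`. -/
theorem stmt_15 :
    ¬ ∃ f : (n : ℕ) → SimpleGraph (Fin n) → ℝ,
      (∀ (m n : ℕ) (T₁ : SimpleGraph (Fin m)) (T₂ : SimpleGraph (Fin n)),
        T₁.IsTree → T₂.IsTree → Nonempty (T₁ ≃g T₂) → f m T₁ = f n T₂) ∧
      (∀ (n : ℕ) (G T₁ T₂ : SimpleGraph (Fin n)), G.Connected →
        T₁ ≤ G → T₂ ≤ G → T₁.IsTree → T₂.IsTree →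
        (f n T₁ ≤ f n T₂ ↔ treeInterNum G T₁ ≤ treeInterNum G T₂)) := by
  rintro ⟨f, hiso, h⟩
  have heq := hiso 5 5 treeA treeB treeA_isTree treeB_isTree isoAB
  have hle := (h 5 fanG treeB treeA (treeA_isTree.connected.mono treeA_le) treeB_le treeA_le
    treeB_isTree treeA_isTree).1 heq.ge
  have h1 := interA
  have h2 := interB
  omega
end
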